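/- arXiv:math/0009161 — 6 statements merged into one kernel-verified Lean document; each statement's English description precedes it below -/
import Mathlib

section
/- Let p > 0 be real, let α_1, …, α_N be distinct complex numbers with Re α_j ≤ p − 1, let p_1, …, p_N and p'_1, …, p'_N be polynomials with complex coefficients, and let f_1, g_1 ∈ L¹_loc([0,∞)). If Σ_{j=1}^N x^{α_j} p_j(ln x) + x^p f_1(x) = Σ_{j=1}^N x^{α_j} p'_j(ln x) + x^p g_1(x) for almost every x ∈ (0,1], then p_j = p'_j for every j (and hence f_1 = g_1 almost everywhere on (0,1]). In particular, the exponents and coefficient polynomials in the expansion at 0 of a function of the class L_{p,q} are uniquely determined by the function. -/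
open MeasureTheory Set Polynomial

namespace UEZ

/-- weight of a polynomial -/
noncomputable def w (R : Polynomial ℂ) : ℕ := by
  classical exact if R = 0 then 0 else R.natDegree + 1

lemma w_le {A B : Polynomial ℂ} (h : A.degree ≤ B.degree) : w A ≤ w B := by
  unfold w
  by_cases hA : A = 0
  · simp [hA]
  · have hB : B ≠ 0 := by
      rintro rfl
      simp at h
      exact hA h
    simp [hA, hB]
    exact natDegree_le_natDegree h

lemma w_lt {A B : Polynomial ℂ} (h : A.degree < B.degree) : w A < w B := by
  unfold w
  have hB : B ≠ 0 := by
    rintro rfl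
    simp at h
  by_cases hA : A = 0
  · simp [hA, hB]
  · simp [hA, hB]
    exact natDegree_lt_natDegree hA h

/-- difference operator -/
noncomputable def D (u v a : ℂ) (R : Polynomial ℂ) : Polynomial ℂ :=
  C u * taylor a R - C v * R

lemma degree_C_mul_le' (u : ℂ) (R : Polynomial ℂ) : (C u * R).degree ≤ R.degree := by
  rw [← smul_eq_C_mul]
  exact degree_smul_le _ _

lemma w_D_le (u v a : ℂ) (R : Polynomial ℂ) : w (D u v a R) ≤ w R := by
  apply w_le
  unfold D
  refine (degree_sub_le _ _).trans (max_le ?_ ?_)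
  · refine (degree_C_mul_le' _ _).trans ?_
    rw [degree_taylor]
  · exact degree_C_mul_le' _ _

lemma w_D_lt (u a : ℂ) (hu : u ≠ 0) (R : Polynomial ℂ) (hR : R ≠ 0) : w (D u u a R) < w R := by
  apply w_lt
  unfold D
  rw [← mul_sub, degree_C_mul hu]
  have := degree_sub_lt_left (p := taylor a R) (q := R) (degree_taylor R a)
    (by simpa using hR) (by simp)
  simpa using this

lemma D_ne (u v a : ℂ) (h : u ≠ v) (R : Polynomial ℂ) (hR : R ≠ 0) : D u v a R ≠ 0 := by
  intro h0
  have h1 : (D u v a R).coeff R.natDegree = 0 := by rw [h0]; simp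
  unfold D at h1
  have h2 : (taylor a R).coeff R.natDegree = R.coeff R.natDegree := by
    have := leadingCoeff_taylor (r := a) (f := R)
    unfold leadingCoeff at this
    rwa [natDegree_taylor] at this
  rw [coeff_sub, coeff_C_mul, coeff_C_mul, h2, ← sub_mul] at h1
  rcases mul_eq_zero.1 h1 with h3 | h3
  · exact h (sub_eq_zero.1 h3)
  · exact hR (leadingCoeff_eq_zero.1 h3)

lemma exists_a (d : ℂ) (hd : d ≠ 0) : ∃ a : ℝ, a < 0 ∧ Complex.exp (a * d) ≠ 1 := by
  refine ⟨-‖d‖⁻¹, by simpa using hd, ?_⟩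
  intro h
  obtain ⟨n, hn⟩ := Complex.exp_eq_one_iff.1 h
  have h1 := congrArg norm hn
  have hd' : ‖d‖ ≠ 0 := by simpa using hd
  simp [hd', abs_of_pos Real.pi_pos] at h1
  have hn0 : n ≠ 0 := by
    rintro rfl
    simp at h1
  have h2 : (1:ℝ) ≤ |(n:ℝ)| := by
    exact_mod_cast Int.one_le_abs hn0
  nlinarith [Real.pi_gt_three]

/-- final case -/
lemma single (β : ℂ) (hβ : β.re ≤ -1) (R : Polynomial ℂ) (hR : R ≠ 0)
    (hint : IntervalIntegrable (fun x : ℝ => (x:ℂ) ^ β * R.eval ((Real.log x : ℝ) : ℂ)) volume 0 1) :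
    False := by
  obtain ⟨c, hc, hev⟩ : ∃ c : ℝ, 0 < c ∧ ∀ᶠ x : ℝ in nhdsWithin 0 (Ioi 0),
      c ≤ ‖R.eval ((Real.log x : ℝ) : ℂ)‖ := by
    by_cases hdeg : 0 < R.degree
    · refine ⟨1, one_pos, ?_⟩
      have : Filter.Tendsto (fun x : ℝ => ‖((Real.log x : ℝ) : ℂ)‖) (nhdsWithin 0 (Ioi 0))
          Filter.atTop := by
        simp only [Complex.norm_real, Real.norm_eq_abs]
        exact Filter.tendsto_abs_atBot_atTop.comp Real.tendsto_log_nhdsGT_zero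
      exact (R.tendsto_norm_atTop hdeg this).eventually_ge_atTop 1
    · rw [eq_C_of_degree_le_zero (not_lt.1 hdeg)] at hR ⊢
      refine ⟨‖R.coeff 0‖, by simpa using hR, ?_⟩
      simp
  have hev1 : ∀ᶠ x : ℝ in nhdsWithin 0 (Ioi 0), x < 1 :=
    Filter.Eventually.filter_mono nhdsWithin_le_nhds (eventually_lt_nhds one_pos)
  have hev2 := hev.and hev1
  rw [eventually_nhdsWithin_iff, Metric.eventually_nhds_iff] at hev2
  obtain ⟨e, he, H⟩ := hev2
  set r := min (e/2) (1/2) with hr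
  have hr0 : 0 < r := by positivity
  have hr1 : r ≤ 1 := (min_le_right _ _).trans (by norm_num)
  have hre : r < e := (min_le_left _ _).trans_lt (by linarith)
  have h1 : IntervalIntegrable (fun x : ℝ => (x:ℂ) ^ β * R.eval ((Real.log x : ℝ) : ℂ)) volume 0 r := by
    refine hint.mono_set ?_
    rw [uIcc_of_le hr0.le, uIcc_of_le zero_le_one]
    exact Icc_subset_Icc_right hr1
  have h2 : IntervalIntegrable (fun x : ℝ => c * x⁻¹) volume 0 r := by
    refine h1.norm.mono_fun' ?_ ?_
    · exact (measurable_const.mul measurable_inv).aestronglyMeasurable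
    · rw [uIoc_of_le hr0.le]
      filter_upwards [ae_restrict_mem measurableSet_Ioc] with x hx
      obtain ⟨k1, k2⟩ := H (y := x) (by
        rw [Real.dist_eq, sub_zero, abs_of_pos hx.1]; linarith [hx.2]) hx.1
      rw [norm_mul, norm_mul, Complex.norm_cpow_eq_rpow_re_of_pos hx.1, mul_comm,
        Real.norm_of_nonneg hc.le, Real.norm_of_nonneg (inv_nonneg.2 hx.1.le), ← Real.rpow_neg_one x]
      have := Real.rpow_le_rpow_of_exponent_ge hx.1 k2.le hβ
      have h3 : 0 ≤ x ^ (-1 : ℝ) := Real.rpow_nonneg hx.1.le _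
      exact mul_le_mul this k1 hc.le (h3.trans this)
  have h3 : IntervalIntegrable (fun x : ℝ => x⁻¹) volume 0 r := by
    have := h2.const_mul c⁻¹
    simpa [← mul_assoc, hc.ne'] using this
  rw [intervalIntegrable_inv_iff] at h3
  rcases h3 with h3 | h3
  · exact hr0.ne h3
  · exact h3 left_mem_uIcc

lemma main (n : ℕ) : ∀ (N : ℕ) (β : Fin N → ℂ) (_ : Function.Injective β)
    (_ : ∀ j, (β j).re ≤ -1) (R : Fin N → Polynomial ℂ) (_ : ∑ j, w (R j) ≤ n)
    (_ : IntervalIntegrable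
      (fun x : ℝ => ∑ j, (x:ℂ) ^ (β j) * (R j).eval ((Real.log x : ℝ) : ℂ)) volume 0 1),
    ∀ j, R j = 0 := by
  induction n with
  | zero =>
    intro N β _ _ R hw _ j
    have h := Finset.sum_eq_zero_iff.1 (Nat.le_zero.1 hw) j (Finset.mem_univ j)
    by_contra hj
    simp [w, hj] at h
  | succ n ih =>
    intro N β hinj hβ R hw hint k
    by_contra hk
    by_cases hex : ∃ j, j ≠ k ∧ R j ≠ 0
    · obtain ⟨j, hjk, hj⟩ := hex
      obtain ⟨a, ha, hexp⟩ := exists_a (β k - β j) (sub_ne_zero.2 fun h => hjk (hinj h.symm))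
      have hne : Complex.exp (a * β k) ≠ Complex.exp (a * β j) := by
        intro h
        apply hexp
        rw [mul_sub, Complex.exp_sub, h, div_self (Complex.exp_ne_zero _)]
      refine D_ne _ _ a hne (R k) hk
        (ih N β hinj hβ (fun i => D (Complex.exp (a * β i)) (Complex.exp (a * β j)) a (R i)) ?_ ?_ k)
      · refine Nat.le_of_lt_succ (lt_of_lt_of_le ?_ hw)
        exact Finset.sum_lt_sum (fun i _ => w_D_le _ _ _ _)
          ⟨j, Finset.mem_univ _, w_D_lt _ _ (Complex.exp_ne_zero _) _ hj⟩
      · have hs := hint.comp_mul_left (c := Real.exp a)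
        have hs' := hs.mono_set (c := 0) (d := 1) (by
          rw [zero_div, uIcc_of_le zero_le_one, uIcc_of_le (by positivity)]
          apply Icc_subset_Icc_right
          rw [le_div_iff₀ (Real.exp_pos a), one_mul]
          exact Real.exp_le_one_iff.2 ha.le)
        refine (hs'.sub (hint.const_mul (Complex.exp (a * β j)))).congr ?_
        intro x hx
        rw [uIoc_of_le zero_le_one] at hx
        have hx0 := hx.1
        simp only [D, Finset.mul_sum]
        rw [← Finset.sum_sub_distrib]
        refine Finset.sum_congr rfl fun i _ => ?_
        have e1 : ((Real.exp a * x : ℝ) : ℂ) ^ β i = Complex.exp (a * β i) * (x:ℂ) ^ β i := by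
          rw [Complex.ofReal_mul, Complex.mul_cpow_ofReal_nonneg (Real.exp_pos a).le hx0.le,
            Complex.cpow_def_of_ne_zero (by exact_mod_cast (Real.exp_pos a).ne'),
            ← Complex.ofReal_log (Real.exp_pos a).le, Real.log_exp]
        have e2 : ((Real.log (Real.exp a * x) : ℝ) : ℂ) = (Real.log x : ℝ) + a := by
          rw [Real.log_mul (Real.exp_pos a).ne' hx0.ne', Real.log_exp]
          push_cast; ring
        rw [e1, e2, eval_sub, eval_mul, eval_mul, eval_C, eval_C, taylor_eval]
        ring
    · push Not at hex
      refine single (β k) (hβ k) (R k) hk ?_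
      refine hint.congr ?_
      intro x hx
      refine Finset.sum_eq_single_of_mem k (Finset.mem_univ _) fun i _ hi => ?_
      rw [hex i hi]; simp

end UEZ

/-- **Uniqueness of finite asymptotic expansions at 0.**
If two expansions `Σ_j x^{α_j} p_j(log x) + x^p f₁(x)` and
`Σ_j x^{α_j} p'_j(log x) + x^p g₁(x)` (with distinct exponents `α_j` of real part
`≤ p - 1` and locally integrable remainders) agree for a.e. `x ∈ (0,1]`, then the
coefficient polynomials agree, and hence the remainders agree a.e. on `(0,1]`. -/
theorem uniqueness_of_expansion_at_zero
    (p : ℝ) (hp : 0 < p) (N : ℕ) (α : Fin N → ℂ)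
    (hdist : Function.Injective α) (hle : ∀ j, (α j).re ≤ p - 1)
    (P P' : Fin N → Polynomial ℂ) (f₁ g₁ : ℝ → ℂ)
    (hf₁ : LocallyIntegrableOn f₁ (Ici 0))
    (hg₁ : LocallyIntegrableOn g₁ (Ici 0))
    (heq : ∀ᵐ (x : ℝ) ∂(volume.restrict (Ioc (0:ℝ) 1)),
      (∑ j, (x : ℂ) ^ (α j) * (P j).eval ((Real.log x : ℝ) : ℂ)) + (x ^ p : ℝ) * f₁ x =
      (∑ j, (x : ℂ) ^ (α j) * (P' j).eval ((Real.log x : ℝ) : ℂ)) + (x ^ p : ℝ) * g₁ x) :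
    (∀ j, P j = P' j) ∧
    ∀ᵐ (x : ℝ) ∂(volume.restrict (Ioc (0:ℝ) 1)), f₁ x = g₁ x := by
  have hP : ∀ j, P j = P' j := by
    have hint : IntervalIntegrable (fun x => g₁ x - f₁ x) volume 0 1 := by
      rw [intervalIntegrable_iff_integrableOn_Icc_of_le zero_le_one]
      have hs : Icc (0:ℝ) 1 ⊆ Ici 0 := fun x hx => hx.1
      exact (hg₁.integrableOn_compact_subset hs isCompact_Icc).sub
        (hf₁.integrableOn_compact_subset hs isCompact_Icc)
    have key := UEZ.main _ N (fun j => α j - p) (fun i j h => hdist (by simpa using h))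
      (fun j => by have := hle j; simp; linarith) (fun j => P j - P' j) le_rfl ?_
    · exact fun j => sub_eq_zero.1 (key j)
    · refine hint.congr_ae ?_
      rw [uIoc_of_le zero_le_one]
      filter_upwards [heq, ae_restrict_mem measurableSet_Ioc] with x hx hm
      have hx0 : (x:ℂ) ≠ 0 := by exact_mod_cast hm.1.ne'
      have hxp : ((x ^ p : ℝ) : ℂ) ≠ 0 := by exact_mod_cast (Real.rpow_pos_of_pos hm.1 p).ne'
      apply mul_left_cancel₀ hxp
      rw [Finset.mul_sum]
      have : ∀ j, ((x ^ p : ℝ) : ℂ) * ((x:ℂ) ^ (α j - p) * (P j - P' j).eval ((Real.log x : ℝ) : ℂ))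
          = (x : ℂ) ^ (α j) * (P j).eval ((Real.log x : ℝ) : ℂ)
            - (x : ℂ) ^ (α j) * (P' j).eval ((Real.log x : ℝ) : ℂ) := by
        intro j
        rw [Complex.cpow_sub _ _ hx0, ← Complex.ofReal_cpow hm.1.le, eval_sub]
        field_simp
      simp only [this, Finset.sum_sub_distrib]
      linear_combination -hx
  refine ⟨hP, ?_⟩
  filter_upwards [heq, ae_restrict_mem measurableSet_Ioc] with x hx hm
  have hxp : ((x ^ p : ℝ) : ℂ) ≠ 0 := by exact_mod_cast (Real.rpow_pos_of_pos hm.1 p).ne'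
  simp only [hP] at hx
  exact mul_left_cancel₀ hxp (add_left_cancel hx)
end

section
/- Let α ∈ ℂ and k ∈ ℕ₀, and let p, q > 0 satisfy Re α ≤ p − 1 and Re α ≥ −q − 1. Then the function f(x) = x^α (ln x)^k belongs to L_{p,q} and its regularized integral vanishes: −∫_0^∞ x^α (ln x)^k dx = 0. -/
open MeasureTheory Set Polynomial Filter
open scoped Topology Classical

noncomputable section

/-- `f` has a finite asymptotic expansion at `0` with exponents `α j`, coefficient
polynomials (in `log x`) `P j`, and remainder `x ^ p * f₁ x` with `f₁` locally
integrable on `[0,∞)`.  The real parts of the exponents are increasing and `≤ p - 1`,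
the exponents are distinct and the coefficient polynomials are nontrivial. -/
def ExpandsAtZero (p : ℝ) (f : ℝ → ℂ) {N : ℕ} (α : Fin N → ℂ)
    (P : Fin N → Polynomial ℂ) : Prop :=
  Monotone (fun j => (α j).re) ∧ Function.Injective α ∧
  (∀ j, (α j).re ≤ p - 1) ∧ (∀ j, P j ≠ 0) ∧
  ∃ f₁ : ℝ → ℂ, LocallyIntegrableOn f₁ (Ici 0) ∧
    ∀ x : ℝ, 0 < x →
      f x = (∑ j, (x : ℂ) ^ (α j) * (P j).eval ((Real.log x : ℝ) : ℂ)) + (x ^ p : ℝ) * f₁ x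

/-- `f` has a finite asymptotic expansion at `∞` with exponents `β j`, coefficient
polynomials (in `log x`) `Q j`, and remainder `x ^ (-q) * f₂ x` with `f₂`
integrable on `[1,∞)`.  The real parts of the exponents are decreasing and `≥ -q - 1`,
the exponents are distinct and the coefficient polynomials are nontrivial. -/
def ExpandsAtInfty (q : ℝ) (f : ℝ → ℂ) {M : ℕ} (β : Fin M → ℂ)
    (Q : Fin M → Polynomial ℂ) : Prop :=
  Antitone (fun j => (β j).re) ∧ Function.Injective β ∧
  (∀ j, -q - 1 ≤ (β j).re) ∧ (∀ j, Q j ≠ 0) ∧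
  ∃ f₂ : ℝ → ℂ, IntegrableOn f₂ (Ici 1) ∧
    ∀ x : ℝ, 0 < x →
      f x = (∑ j, (x : ℂ) ^ (β j) * (Q j).eval ((Real.log x : ℝ) : ℂ)) + (x ^ (-q) : ℝ) * f₂ x

/-- The class `L_{p,q}((0,∞))` of Brüning–Seeley–Lesch. -/
def MemLpq (p q : ℝ) (f : ℝ → ℂ) : Prop :=
  (∃ (N : ℕ) (α : Fin N → ℂ) (P : Fin N → Polynomial ℂ), ExpandsAtZero p f α P) ∧
  (∃ (M : ℕ) (β : Fin M → ℂ) (Q : Fin M → Polynomial ℂ), ExpandsAtInfty q f β Q)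

/-- The coefficient polynomial attached to the exponent `c` in an expansion
(zero if `c` does not occur among the exponents). -/
def coeffPolyAt {N : ℕ} (c : ℂ) (α : Fin N → ℂ) (P : Fin N → Polynomial ℂ) : Polynomial ℂ :=
  ∑ j, if α j = c then P j else 0

/-- `L` is the limit in the mean of `f` at `0`: the constant coefficient of the
exponent-`0` coefficient polynomial in an expansion of `f` at `0` (for definiteness,
an expansion with remainder exponent `p ≥ 1`, which makes this coefficient unique). -/
def IsLimZero (f : ℝ → ℂ) (L : ℂ) : Prop :=
  ∃ (p : ℝ) (N : ℕ) (α : Fin N → ℂ) (P : Fin N → Polynomial ℂ),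
    1 ≤ p ∧ ExpandsAtZero p f α P ∧ (coeffPolyAt 0 α P).coeff 0 = L

/-- `L` is the limit in the mean of `f` at `∞`. -/
def IsLimInfty (f : ℝ → ℂ) (L : ℂ) : Prop :=
  ∃ (q : ℝ) (M : ℕ) (β : Fin M → ℂ) (Q : Fin M → Polynomial ℂ),
    0 < q ∧ ExpandsAtInfty q f β Q ∧ (coeffPolyAt 0 β Q).coeff 0 = L

/-- `LIM_{x→0} f(x)` (junk value `0` if `f` has no admissible expansion at `0`). -/
def limZero (f : ℝ → ℂ) : ℂ := if h : ∃ L, IsLimZero f L then h.choose else 0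

/-- `LIM_{x→∞} f(x)` (junk value `0` if `f` has no admissible expansion at `∞`). -/
def limInfty (f : ℝ → ℂ) : ℂ := if h : ∃ L, IsLimInfty f L then h.choose else 0

/-- `F(x) = ∫_1^x f(s) ds`. -/
def primitive (f : ℝ → ℂ) : ℝ → ℂ := fun x => ∫ s in (1:ℝ)..x, f s

/-- The regularized integral `⨍_0^∞ f(x) dx := LIM_{x→∞} F(x) - LIM_{x→0} F(x)`,
where `F(x) = ∫_1^x f(s) ds`. -/
def regInt (f : ℝ → ℂ) : ℂ := limInfty (primitive f) - limZero (primitive f)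


/-! ### Helper lemmas -/

lemma aux_exists_shift (z : ℂ) (hz : z ≠ 0) : ∃ h : ℝ, 0 < h ∧ Complex.exp (z * h) ≠ 1 := by
  have hn : 0 < ‖z‖ := norm_pos_iff.mpr hz
  refine ⟨1 / ‖z‖, by positivity, fun hh => ?_⟩
  rw [Complex.exp_eq_one_iff] at hh
  obtain ⟨n, hn'⟩ := hh
  have h2 := congrArg norm hn'
  rw [norm_mul] at h2
  simp only [Complex.norm_real, norm_mul, Complex.norm_intCast, Complex.norm_I] at h2
  have h3 : ‖z‖ * ‖1 / ‖z‖‖ = 1 := by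
    rw [Real.norm_of_nonneg (by positivity)]; field_simp
  rw [h3] at h2
  have hpi := Real.pi_gt_three
  simp only [Real.norm_of_nonneg Real.pi_pos.le, Complex.norm_ofNat, mul_one] at h2
  rcases eq_or_ne n 0 with h0 | h0
  · simp [h0] at h2
  · have : (1:ℝ) ≤ |(n:ℝ)| := by exact_mod_cast Int.one_le_abs h0
    nlinarith

lemma aux_base (z : ℂ) (hz : 0 ≤ z.re) (R : Polynomial ℂ) (hR : R ≠ 0) :
    ¬ IntegrableOn (fun t : ℝ => Complex.exp (z * t) * R.eval (t : ℂ)) (Ioi 0) := by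
  intro hi
  have hev : ∃ c : ℝ, 0 < c ∧ ∀ᶠ t : ℝ in atTop, c ≤ ‖R.eval (t : ℂ)‖ := by
    by_cases hd : 0 < R.degree
    · refine ⟨1, one_pos, ?_⟩
      have : Tendsto (fun t : ℝ => ‖R.eval (t : ℂ)‖) atTop atTop := by
        refine R.tendsto_norm_atTop hd ?_
        simpa using tendsto_abs_atTop_atTop
      exact this.eventually_ge_atTop 1
    · have := Polynomial.eq_C_of_degree_le_zero (not_lt.mp hd)
      have hc : R.coeff 0 ≠ 0 := by
        intro h; rw [h] at this; simp at this; exact hR this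
      refine ⟨‖R.coeff 0‖, norm_pos_iff.mpr hc, Eventually.of_forall fun t => ?_⟩
      rw [this]; simp
  obtain ⟨c, hc, he⟩ := hev
  obtain ⟨T, hT⟩ := eventually_atTop.mp he
  have h1 : IntegrableOn (fun t : ℝ => Complex.exp (z * t) * R.eval (t : ℂ)) (Ioi (max T 0)) :=
    hi.mono_set (Ioi_subset_Ioi (le_max_right _ _))
  have h2 : IntegrableOn (fun _ : ℝ => c) (Ioi (max T 0)) := by
    refine Integrable.mono h1 (by fun_prop) ?_
    refine (ae_restrict_iff' measurableSet_Ioi).mpr (Eventually.of_forall fun t ht => ?_)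
    have ht' : max T 0 < t := ht
    have hT1 : T ≤ t := (le_max_left _ _).trans ht'.le
    have ht0 : 0 ≤ t := (le_max_right _ _).trans ht'.le
    rw [norm_mul, Complex.norm_exp, Real.norm_of_nonneg hc.le]
    have h3 := hT t hT1
    have h4 : 1 ≤ Real.exp ((z * t).re) := by
      apply Real.one_le_exp
      simp; positivity
    nlinarith
  rw [integrableOn_const_iff] at h2
  simp [hc.ne'] at h2

/-- The coefficient polynomial after applying `S_h - e^{w h}`. -/
def auxD (h : ℝ) (w z : ℂ) (R : Polynomial ℂ) : Polynomial ℂ :=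
  C (Complex.exp (z * h)) * R.comp (X + C (h : ℂ)) - C (Complex.exp (w * h)) * R

lemma auxD_eval (h : ℝ) (w z : ℂ) (R : Polynomial ℂ) (t : ℝ) :
    Complex.exp (z * t) * (auxD h w z R).eval (t : ℂ) =
      Complex.exp (z * ((t + h : ℝ) : ℂ)) * R.eval ((t + h : ℝ) : ℂ)
        - Complex.exp (w * h) * (Complex.exp (z * t) * R.eval (t : ℂ)) := by
  simp only [auxD, eval_sub, eval_mul, eval_C, eval_comp, eval_add, eval_X]
  push_cast
  rw [mul_add, Complex.exp_add]
  ring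

lemma aux_comp_degree (a : ℂ) (R : Polynomial ℂ) (hR : R ≠ 0) :
    (R.comp (X + C a) - R).degree < R.degree := by
  have h1 : (R.comp (X + C a)).natDegree = R.natDegree := by
    rw [natDegree_comp, natDegree_X_add_C, mul_one]
  have h2 : (R.comp (X + C a)).leadingCoeff = R.leadingCoeff := by
    rw [leadingCoeff_comp (by simp)]; simp
  have h0 : R.comp (X + C a) ≠ 0 := by
    rw [← leadingCoeff_ne_zero, h2]; simpa using hR
  have hd : (R.comp (X + C a)).degree = R.degree := by
    rw [degree_eq_natDegree h0, degree_eq_natDegree hR, h1]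
  rw [← hd]
  exact degree_sub_lt_left hd h0 h2

lemma auxD_degree (h : ℝ) (w : ℂ) (R : Polynomial ℂ) (n : ℕ) (hR : R.degree < ((n + 1 : ℕ) : WithBot ℕ)) :
    (auxD h w w R).degree < (n : WithBot ℕ) := by
  by_cases h0 : R = 0
  · subst h0; simp [auxD]
  have : auxD h w w R = C (Complex.exp (w * h)) * (R.comp (X + C (h : ℂ)) - R) := by
    rw [auxD]; ring
  rw [this, degree_C_mul (Complex.exp_ne_zero _)]
  have h1 := aux_comp_degree (h : ℂ) R h0
  rw [degree_eq_natDegree h0] at h1 hR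
  have h2 : R.natDegree < n + 1 := by exact_mod_cast hR
  refine lt_of_lt_of_le h1 ?_
  exact_mod_cast Nat.lt_succ_iff.mp h2

lemma auxD_ne_zero (h : ℝ) (w z : ℂ) (R : Polynomial ℂ) (hR : R ≠ 0)
    (hne : Complex.exp ((z - w) * h) ≠ 1) : auxD h w z R ≠ 0 := by
  intro h0
  have h1 : (R.comp (X + C (h : ℂ))).natDegree = R.natDegree := by
    rw [natDegree_comp, natDegree_X_add_C, mul_one]
  have h2 : (R.comp (X + C (h : ℂ))).leadingCoeff = R.leadingCoeff := by
    rw [leadingCoeff_comp (by simp)]; simp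
  have h3 := congrArg (fun P => P.coeff R.natDegree) h0
  simp only [auxD, coeff_sub, coeff_C_mul, coeff_zero] at h3
  rw [leadingCoeff, h1] at h2
  rw [h2, leadingCoeff, ← sub_mul] at h3
  have h4 : R.coeff R.natDegree ≠ 0 := by
    have := leadingCoeff_ne_zero.mpr hR
    exact this
  have h5 := (mul_eq_zero.mp h3).resolve_right h4
  apply hne
  rw [sub_mul, Complex.exp_sub, sub_eq_zero.mp h5]
  exact div_self (Complex.exp_ne_zero _)

lemma aux_shift_integrable (E : ℝ → ℂ) (hE : IntegrableOn E (Ioi 0)) (h : ℝ) (hh : 0 < h) (a : ℂ) :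
    IntegrableOn (fun t => E (t + h) - a * E t) (Ioi 0) := by
  refine Integrable.sub ?_ (hE.const_mul a)
  have h1 : IntegrableOn E (Ioi h) := hE.mono_set (Ioi_subset_Ioi hh.le)
  have := (measurePreserving_add_right (volume : Measure ℝ) h).integrableOn_comp_preimage
    (measurableEmbedding_addRight h) (f := E) (s := Ioi h)
  rw [← this] at h1
  change IntegrableOn (fun t => E (t + h)) (Ioi 0)
  simpa [Function.comp_def] using h1

lemma aux_main (g : ℂ → ℂ) (hg : Function.Injective g) (z : ℂ) (hz : 0 ≤ (g z).re) (s : Finset ℂ) :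
    ∀ R : ℂ → Polynomial ℂ, z ∉ s → R z ≠ 0 →
    ¬ IntegrableOn (fun t : ℝ => Complex.exp (g z * t) * (R z).eval (t : ℂ)
      + ∑ w ∈ s, Complex.exp (g w * t) * (R w).eval (t : ℂ)) (Ioi 0) := by
  induction s using Finset.induction_on with
  | empty =>
    intro R _ hR
    simpa using aux_base (g z) hz (R z) hR
  | insert w s hw ih =>
    intro R hzs hR
    have hzw : z ≠ w := fun h => hzs (by simp [h])
    have hzs' : z ∉ s := fun h => hzs (by simp [h])
    obtain ⟨n, hn⟩ : ∃ n : ℕ, (R w).degree < (n : WithBot ℕ) :=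
      ⟨(R w).natDegree + 1, lt_of_le_of_lt degree_le_natDegree (by exact_mod_cast Nat.lt_succ_self _)⟩
    induction n generalizing R with
    | zero =>
      have h0 : R w = 0 := by
        rw [← degree_eq_bot]
        exact (Nat.WithBot.lt_zero_iff).mp (by simpa using hn)
      have := ih R hzs' hR
      simpa [Finset.sum_insert hw, h0] using this
    | succ n ihn =>
      intro hi
      obtain ⟨h, hh, hne⟩ := aux_exists_shift (g z - g w) (sub_ne_zero.mpr (hg.ne hzw))
      refine ihn (fun v => auxD h (g w) (g v) (R v)) (auxD_ne_zero h _ _ _ hR hne)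
        (auxD_degree h _ _ n hn) ?_
      have h1 := aux_shift_integrable _ hi h hh (Complex.exp (g w * h))
      refine (congrArg (fun φ : ℝ → ℂ => IntegrableOn φ (Ioi (0:ℝ)) volume) (funext fun t => ?_)).mpr h1
      simp only [auxD_eval, Finset.sum_sub_distrib, mul_add, Finset.mul_sum]
      ring

lemma aux_main' (g : ℂ → ℂ) (hg : Function.Injective g) (z : ℂ) (hz : 0 ≤ (g z).re) (s : Finset ℂ)
    (hzs : z ∈ s) (R : ℂ → Polynomial ℂ)
    (hi : IntegrableOn (fun t : ℝ => ∑ w ∈ s, Complex.exp (g w * t) * (R w).eval (t : ℂ)) (Ioi 0)) :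
    R z = 0 := by
  by_contra hR
  refine aux_main g hg z hz (s.erase z) R (by simp) hR ?_
  refine (congrArg (fun φ : ℝ → ℂ => IntegrableOn φ (Ioi (0:ℝ)) volume) (funext fun t => ?_)).mpr hi
  exact Finset.add_sum_erase s (fun w => Complex.exp (g w * t) * (R w).eval (t : ℂ)) hzs

/-- Difference coefficient. -/
def auxR {N : ℕ} (α : Fin N → ℂ) (P : Fin N → Polynomial ℂ) (c : ℂ) (P1 P2 : Polynomial ℂ)
    (w : ℂ) : Polynomial ℂ :=
  (if c = w then P1 else 0) + (if 0 = w then P2 else 0) - coeffPolyAt w α P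

def auxS {N : ℕ} (α : Fin N → ℂ) (c : ℂ) : Finset ℂ :=
  insert 0 (insert c (Finset.univ.image α))

lemma aux_sum {N : ℕ} (α : Fin N → ℂ) (P : Fin N → Polynomial ℂ) (c : ℂ) (P1 P2 : Polynomial ℂ)
    (e : ℂ → ℂ) (t : ℂ) :
    ∑ w ∈ auxS α c, e w * (auxR α P c P1 P2 w).eval t =
      e c * P1.eval t + e 0 * P2.eval t - ∑ j, e (α j) * (P j).eval t := by
  have hc : c ∈ auxS α c := by simp [auxS]
  have h0 : (0:ℂ) ∈ auxS α c := by simp [auxS]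
  have hj : ∀ j, α j ∈ auxS α c := fun j => by simp [auxS]
  simp only [auxR, coeffPolyAt, eval_sub, eval_add, mul_sub, mul_add, Finset.sum_sub_distrib,
    Finset.sum_add_distrib, eval_finsetSum, Finset.mul_sum]
  congr 1
  · congr 1
    · rw [Finset.sum_eq_single_of_mem c hc]
      · simp
      · intro b _ hb; simp [hb.symm]
    · rw [Finset.sum_eq_single_of_mem 0 h0]
      · simp
      · intro b _ hb; simp [hb.symm]
  · rw [Finset.sum_comm]
    refine Finset.sum_congr rfl fun j _ => ?_
    rw [Finset.sum_eq_single_of_mem (α j) (hj j)]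
    · simp
    · intro b _ hb; simp [hb.symm]

lemma aux_cpow (t : ℝ) (c : ℂ) : ((Real.exp t : ℝ) : ℂ) ^ c = Complex.exp (c * t) := by
  rw [Complex.ofReal_exp, Complex.cpow_def_of_ne_zero (Complex.exp_ne_zero _),
    ← Complex.ofReal_exp, ← Complex.ofReal_log (Real.exp_pos t).le, Real.log_exp, mul_comm]

lemma aux_unique_infty (f : ℝ → ℂ) (c : ℂ) (hc : c ≠ 0) (P1 P2 : Polynomial ℂ)
    (hf : ∀ x : ℝ, 0 < x → f x = (x : ℂ) ^ c * P1.eval ((Real.log x : ℝ) : ℂ)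
      + P2.eval ((Real.log x : ℝ) : ℂ)) (L : ℂ) (hL : IsLimInfty f L) : L = P2.coeff 0 := by
  obtain ⟨q, M, β, Q, hq, ⟨-, -, -, -, f₂, hf₂, hexp⟩, rfl⟩ := hL
  have key : auxR β Q c P1 P2 0 = 0 := by
    refine aux_main' id Function.injective_id 0 (by simp) (auxS β c) (by simp [auxS]) _ ?_
    have him : Real.exp '' (Ioi 0) = Ioi 1 := by
      ext y; constructor
      · rintro ⟨t, ht, rfl⟩; exact Real.one_lt_exp_iff.mpr ht
      · intro hy
        exact ⟨Real.log y, Real.log_pos hy, Real.exp_log (one_pos.trans hy)⟩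
    have h1 : IntegrableOn f₂ (Real.exp '' (Ioi 0)) := by
      rw [him]; exact hf₂.mono_set Ioi_subset_Ici_self
    rw [integrableOn_image_iff_integrableOn_abs_deriv_smul measurableSet_Ioi
      (fun x _ => (Real.hasDerivAt_exp x).hasDerivWithinAt) (Real.exp_injective.injOn)] at h1
    refine Integrable.mono h1 (Continuous.aestronglyMeasurable (by simp only [id]; fun_prop)) ?_
    refine (ae_restrict_iff' measurableSet_Ioi).mpr (Eventually.of_forall fun t ht => ?_)
    have ht0 : 0 < t := ht
    have e1 := hexp (Real.exp t) (Real.exp_pos t)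
    rw [hf _ (Real.exp_pos t)] at e1
    simp only [aux_cpow, Real.log_exp] at e1
    have e2 := aux_sum β Q c P1 P2 (fun w => Complex.exp (w * t)) (t : ℂ)
    simp only [id]
    rw [e2]
    simp only [zero_mul, Complex.exp_zero, one_mul]
    rw [e1, add_sub_cancel_left, norm_mul, norm_smul, Complex.norm_real]
    refine mul_le_mul_of_nonneg_right ?_ (norm_nonneg _)
    rw [← Real.exp_mul, Real.norm_of_nonneg (Real.exp_pos _).le, Real.norm_of_nonneg (abs_nonneg _),
      abs_of_pos (Real.exp_pos _), Real.exp_le_exp]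
    nlinarith
  simp only [auxR, hc, if_true, if_false, zero_add] at key
  rw [sub_eq_zero.mp key]

lemma aux_unique_zero (f : ℝ → ℂ) (c : ℂ) (hc : c ≠ 0) (P1 P2 : Polynomial ℂ)
    (hf : ∀ x : ℝ, 0 < x → f x = (x : ℂ) ^ c * P1.eval ((Real.log x : ℝ) : ℂ)
      + P2.eval ((Real.log x : ℝ) : ℂ)) (L : ℂ) (hL : IsLimZero f L) : L = P2.coeff 0 := by
  obtain ⟨p, M, β, Q, hp, ⟨-, -, -, -, f₁, hf₁, hexp⟩, rfl⟩ := hL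
  have key : auxR β Q c P1 P2 0 = 0 := by
    suffices h : (fun w => (auxR β Q c P1 P2 w).comp (-X)) 0 = 0 by
      have h' := congrArg (fun P => P.comp (-X)) h
      simpa [comp_assoc] using h'
    refine aux_main' (fun w => -w) neg_injective 0 (by simp) (auxS β c) (by simp [auxS])
      (fun w => (auxR β Q c P1 P2 w).comp (-X)) ?_
    have him : (fun t => Real.exp (-t)) '' (Ioi 0) ⊆ Icc 0 1 := by
      rintro y ⟨t, ht, rfl⟩
      have ht0 : 0 < t := ht
      exact ⟨(Real.exp_pos _).le, Real.exp_le_one_iff.mpr (by linarith)⟩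
    have h1 : IntegrableOn f₁ ((fun t => Real.exp (-t)) '' (Ioi 0)) :=
      (hf₁.integrableOn_compact_subset (Icc_subset_Ici_self) isCompact_Icc).mono_set him
    rw [integrableOn_image_iff_integrableOn_abs_deriv_smul (f := fun t => Real.exp (-t))
      (f' := fun t => Real.exp (-t) * -1) measurableSet_Ioi
      (fun x _ => ((Real.hasDerivAt_exp (-x)).comp x (hasDerivAt_neg x)).hasDerivWithinAt)
      (fun a _ b _ hab => neg_injective (Real.exp_injective hab))] at h1
    refine Integrable.mono h1 (Continuous.aestronglyMeasurable (by fun_prop)) ?_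
    refine (ae_restrict_iff' measurableSet_Ioi).mpr (Eventually.of_forall fun t ht => ?_)
    have ht0 : 0 < t := ht
    have e1 := hexp (Real.exp (-t)) (Real.exp_pos _)
    rw [hf _ (Real.exp_pos _)] at e1
    simp only [aux_cpow, Real.log_exp] at e1
    have e2 := aux_sum β Q c P1 P2 (fun w => Complex.exp (w * ((-t : ℝ) : ℂ))) ((-t : ℝ) : ℂ)
    have e3 : ∑ w ∈ auxS β c, Complex.exp (-w * t) *
        ((auxR β Q c P1 P2 w).comp (-X)).eval (t : ℂ) =
        ∑ w ∈ auxS β c, Complex.exp (w * ((-t : ℝ) : ℂ)) *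
          (auxR β Q c P1 P2 w).eval ((-t : ℝ) : ℂ) := by
      refine Finset.sum_congr rfl fun w _ => ?_
      simp [eval_comp]
    rw [e3, e2]
    simp only [zero_mul, Complex.exp_zero, one_mul]
    rw [e1, add_sub_cancel_left, norm_mul, norm_smul, Complex.norm_real]
    refine mul_le_mul_of_nonneg_right ?_ (norm_nonneg _)
    rw [← Real.exp_mul, Real.norm_of_nonneg (Real.exp_pos _).le, Real.norm_of_nonneg (abs_nonneg _),
      mul_neg_one, abs_neg, abs_of_pos (Real.exp_pos _), Real.exp_le_exp]
    nlinarith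
  simp only [auxR, hc, if_true, if_false, zero_add] at key
  rw [sub_eq_zero.mp key]

lemma aux_zero_one (p : ℝ) (f : ℝ → ℂ) (c : ℂ) (P : Polynomial ℂ) (hP : P ≠ 0) (hc : c.re ≤ p - 1)
    (hf : ∀ x : ℝ, 0 < x → f x = (x : ℂ) ^ c * P.eval ((Real.log x : ℝ) : ℂ)) :
    ExpandsAtZero p f (fun _ : Fin 1 => c) (fun _ => P) := by
  refine ⟨fun _ _ _ => le_rfl, Function.injective_of_subsingleton _, fun _ => hc, fun _ => hP,
    fun _ => 0, locallyIntegrableOn_zero, fun x hx => ?_⟩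
  simp [hf x hx]

lemma aux_infty_one (q : ℝ) (f : ℝ → ℂ) (c : ℂ) (P : Polynomial ℂ) (hP : P ≠ 0) (hc : -q - 1 ≤ c.re)
    (hf : ∀ x : ℝ, 0 < x → f x = (x : ℂ) ^ c * P.eval ((Real.log x : ℝ) : ℂ)) :
    ExpandsAtInfty q f (fun _ : Fin 1 => c) (fun _ => P) := by
  refine ⟨fun _ _ _ => le_rfl, Function.injective_of_subsingleton _, fun _ => hc, fun _ => hP,
    fun _ => 0, integrableOn_zero, fun x hx => ?_⟩
  simp [hf x hx]

lemma aux_inj (c d : ℂ) (h : c ≠ d) : Function.Injective ![c, d] := by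
  intro i j hij
  fin_cases i <;> fin_cases j <;> simp_all

lemma aux_zero_two (p : ℝ) (f : ℝ → ℂ) (c d : ℂ) (P Q : Polynomial ℂ) (hcd : c ≠ d)
    (hle : c.re ≤ d.re) (hP : P ≠ 0) (hQ : Q ≠ 0) (hd : d.re ≤ p - 1)
    (hf : ∀ x : ℝ, 0 < x → f x = (x : ℂ) ^ c * P.eval ((Real.log x : ℝ) : ℂ)
      + (x : ℂ) ^ d * Q.eval ((Real.log x : ℝ) : ℂ)) :
    ExpandsAtZero p f ![c, d] ![P, Q] := by
  refine ⟨?_, aux_inj c d hcd, ?_, ?_,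
    fun _ => 0, locallyIntegrableOn_zero, fun x hx => ?_⟩
  · intro i j hij
    fin_cases i <;> fin_cases j <;> simp_all
  · intro j; fin_cases j
    · exact hle.trans hd
    · exact hd
  · intro j; fin_cases j
    · exact hP
    · exact hQ
  · simp [hf x hx]

lemma aux_infty_two (q : ℝ) (f : ℝ → ℂ) (c d : ℂ) (P Q : Polynomial ℂ) (hcd : c ≠ d)
    (hle : d.re ≤ c.re) (hP : P ≠ 0) (hQ : Q ≠ 0) (hd : -q - 1 ≤ d.re)
    (hf : ∀ x : ℝ, 0 < x → f x = (x : ℂ) ^ c * P.eval ((Real.log x : ℝ) : ℂ)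
      + (x : ℂ) ^ d * Q.eval ((Real.log x : ℝ) : ℂ)) :
    ExpandsAtInfty q f ![c, d] ![P, Q] := by
  refine ⟨?_, aux_inj c d hcd, ?_, ?_,
    fun _ => 0, integrableOn_zero, fun x hx => ?_⟩
  · intro i j hij
    fin_cases i <;> fin_cases j <;> simp_all
  · intro j; fin_cases j
    · exact hd.trans hle
    · exact hd
  · intro j; fin_cases j
    · exact hP
    · exact hQ
  · simp [hf x hx]

lemma aux_limZero (f : ℝ → ℂ) (L₀ : ℂ) (h : ∃ L, IsLimZero f L) (hu : ∀ L, IsLimZero f L → L = L₀) :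
    limZero f = L₀ := by
  rw [limZero, dif_pos h]; exact hu _ h.choose_spec

lemma aux_limInfty (f : ℝ → ℂ) (L₀ : ℂ) (h : ∃ L, IsLimInfty f L)
    (hu : ∀ L, IsLimInfty f L → L = L₀) : limInfty f = L₀ := by
  rw [limInfty, dif_pos h]; exact hu _ h.choose_spec

lemma aux_poly (c : ℂ) (hc : c ≠ 0) (k : ℕ) :
    ∃ R : Polynomial ℂ, C c * R + derivative R = X ^ k ∧ R.coeff 0 ≠ 0 := by
  induction k with
  | zero => exact ⟨C (c⁻¹), by simp [← C_mul, hc], by simpa using hc⟩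
  | succ k ih =>
    obtain ⟨R, hR, h0⟩ := ih
    refine ⟨C c⁻¹ * (X ^ (k + 1) - C ((k : ℂ) + 1) * R), ?_, ?_⟩
    · have hcc : (C c : Polynomial ℂ) * C c⁻¹ = 1 := by rw [← C_mul, mul_inv_cancel₀ hc, C_1]
      have hd : derivative (C c⁻¹ * (X ^ (k + 1) - C ((k : ℂ) + 1) * R))
          = C c⁻¹ * (C ((k : ℂ) + 1) * X ^ k - C ((k : ℂ) + 1) * derivative R) := by
        rw [derivative_C_mul, derivative_sub, derivative_C_mul, derivative_X_pow]
        simp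
      rw [hd, ← hR]
      linear_combination (X ^ (k + 1)) * hcc
    · have hk : (k : ℂ) + 1 ≠ 0 := by exact_mod_cast Nat.succ_ne_zero k
      simp only [coeff_C_mul, coeff_sub, coeff_X_pow]
      simp [hc, hk, h0]

lemma aux_primitive (α : ℂ) (k : ℕ) (R : Polynomial ℂ)
    (hR : C (α + 1) * R + derivative R = X ^ k) (x : ℝ) (hx : 0 < x) :
    primitive (fun x : ℝ => (x : ℂ) ^ α * ((Real.log x : ℝ) : ℂ) ^ k) x =
      (x : ℂ) ^ (α + 1) * R.eval ((Real.log x : ℝ) : ℂ) - R.coeff 0 := by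
  have hpos : ∀ y ∈ uIcc 1 x, 0 < y := fun y hy =>
    lt_of_lt_of_le (lt_min one_pos hx) hy.1
  have hder : ∀ y ∈ uIcc 1 x, HasDerivAt
      (fun y : ℝ => (y : ℂ) ^ (α + 1) * R.eval ((Real.log y : ℝ) : ℂ))
      ((y : ℂ) ^ α * ((Real.log y : ℝ) : ℂ) ^ k) y := by
    intro y hy
    have hy0 := hpos y hy
    have hyc : (y : ℂ) ≠ 0 := by exact_mod_cast hy0.ne'
    have d1 : HasDerivAt (fun y : ℝ => (y : ℂ) ^ (α + 1)) ((α + 1) * (y : ℂ) ^ α) y := by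
      have h := (HasDerivAt.cpow_const (c := α + 1) (hasDerivAt_id (y : ℂ))
        (Or.inl (by simpa using hy0))).comp_ofReal
      simpa using h
    have d2 : HasDerivAt (fun y : ℝ => ((Real.log y : ℝ) : ℂ)) ((y⁻¹ : ℝ) : ℂ) y :=
      (Real.hasDerivAt_log hy0.ne').ofReal_comp
    have d3 := (R.hasDerivAt ((Real.log y : ℝ) : ℂ)).comp y d2
    have d4 := d1.mul d3
    refine d4.congr_deriv ?_
    have e := congrArg (fun P => P.eval ((Real.log y : ℝ) : ℂ)) hR
    simp only [eval_add, eval_mul, eval_C, eval_pow, eval_X] at e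
    rw [← e, Complex.cpow_add _ _ hyc, Complex.cpow_one]
    simp only [Function.comp]
    push_cast
    field_simp
  have hcont : ContinuousOn (fun y : ℝ => (y : ℂ) ^ α * ((Real.log y : ℝ) : ℂ) ^ k) (uIcc 1 x) := by
    intro y hy
    have hy0 := hpos y hy
    have c1 : ContinuousAt (fun y : ℝ => (y : ℂ) ^ α) y :=
      Complex.continuousAt_ofReal_cpow_const _ _ (Or.inr hy0.ne')
    have c2 : ContinuousAt (fun y : ℝ => ((Real.log y : ℝ) : ℂ)) y :=
      Complex.continuous_ofReal.continuousAt.comp (Real.continuousAt_log hy0.ne')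
    exact (c1.mul (c2.pow k)).continuousWithinAt
  rw [primitive, intervalIntegral.integral_eq_sub_of_hasDerivAt hder hcont.intervalIntegrable]
  simp [coeff_zero_eq_eval_zero]

lemma aux_regInt (α : ℂ) (k : ℕ) :
    regInt (fun x : ℝ => (x : ℂ) ^ α * ((Real.log x : ℝ) : ℂ) ^ k) = 0 := by
  set F := primitive (fun x : ℝ => (x : ℂ) ^ α * ((Real.log x : ℝ) : ℂ) ^ k) with hF
  suffices h : ∃ L, limInfty F = L ∧ limZero F = L by
    obtain ⟨L, h1, h2⟩ := h
    rw [regInt, ← hF, h1, h2, sub_self]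
  by_cases hc : α + 1 = 0
  · have hk : (k : ℂ) + 1 ≠ 0 := by exact_mod_cast Nat.succ_ne_zero k
    have hR : C (α + 1) * (C ((k : ℂ) + 1)⁻¹ * X ^ (k + 1))
        + derivative (C ((k : ℂ) + 1)⁻¹ * X ^ (k + 1)) = X ^ k := by
      rw [hc, derivative_C_mul, derivative_X_pow]
      have : (C ((k : ℂ) + 1)⁻¹ : Polynomial ℂ) * C ((k : ℂ) + 1) = 1 := by
        rw [← C_mul, inv_mul_cancel₀ hk, C_1]
      simp only [map_zero, zero_mul, zero_add, Nat.add_sub_cancel]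
      push_cast
      rw [← mul_assoc, this, one_mul]
    have hR0 : (C ((k : ℂ) + 1)⁻¹ * X ^ (k + 1) : Polynomial ℂ) ≠ 0 :=
      mul_ne_zero (by simpa using hk) (pow_ne_zero _ X_ne_zero)
    generalize hRR : (C ((k : ℂ) + 1)⁻¹ * X ^ (k + 1) : Polynomial ℂ) = R at hR hR0
    have hRc : R.coeff 0 = 0 := by rw [← hRR]; simp
    have hf : ∀ x : ℝ, 0 < x → F x = (x : ℂ) ^ (0:ℂ) * R.eval ((Real.log x : ℝ) : ℂ) := by
      intro x hx
      rw [hF, aux_primitive α k R hR x hx, hRc, hc, sub_zero]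
    have hf' : ∀ x : ℝ, 0 < x → F x = (x : ℂ) ^ (1:ℂ) * (0 : Polynomial ℂ).eval ((Real.log x : ℝ) : ℂ)
        + R.eval ((Real.log x : ℝ) : ℂ) := by
      intro x hx
      rw [hf x hx]; simp
    refine ⟨R.coeff 0, aux_limInfty _ _ ⟨_, 1, _, _, _, one_pos,
        aux_infty_one 1 F 0 R hR0 (by norm_num) hf, rfl⟩
        (aux_unique_infty F 1 one_ne_zero 0 R hf'), aux_limZero _ _ ⟨_, 1, _, _, _, le_rfl,
        aux_zero_one 1 F 0 R hR0 (by norm_num) hf, rfl⟩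
        (aux_unique_zero F 1 one_ne_zero 0 R hf')⟩
  · obtain ⟨R, hR, h0⟩ := aux_poly (α + 1) hc k
    have hR0 : R ≠ 0 := by rintro rfl; simp at h0
    have hP0 : (C (-R.coeff 0) : Polynomial ℂ) ≠ 0 := by simpa using h0
    have hf : ∀ x : ℝ, 0 < x → F x = (x : ℂ) ^ (α + 1) * R.eval ((Real.log x : ℝ) : ℂ)
        + (C (-R.coeff 0)).eval ((Real.log x : ℝ) : ℂ) := by
      intro x hx
      rw [hF, aux_primitive α k R hR x hx, eval_C, sub_eq_add_neg]
    have hf1 : ∀ x : ℝ, 0 < x → F x = (x : ℂ) ^ (α + 1) * R.eval ((Real.log x : ℝ) : ℂ)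
        + (x : ℂ) ^ (0 : ℂ) * (C (-R.coeff 0)).eval ((Real.log x : ℝ) : ℂ) := by
      intro x hx
      rw [hf x hx, Complex.cpow_zero, one_mul]
    have hf2 : ∀ x : ℝ, 0 < x → F x = (x : ℂ) ^ (0 : ℂ) * (C (-R.coeff 0)).eval ((Real.log x : ℝ) : ℂ)
        + (x : ℂ) ^ (α + 1) * R.eval ((Real.log x : ℝ) : ℂ) := by
      intro x hx
      rw [hf1 x hx, add_comm]
    have hb := abs_le.mp (le_refl |(α + 1).re|)
    have hnn := abs_nonneg (α + 1).re
    refine ⟨_, aux_limInfty _ _ ?_ (aux_unique_infty F (α + 1) hc R _ hf),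
      aux_limZero _ _ ?_ (aux_unique_zero F (α + 1) hc R _ hf)⟩
    · rcases le_total (α + 1).re (0 : ℂ).re with h | h
      · exact ⟨_, 1 + |(α + 1).re|, _, _, _, by positivity,
          aux_infty_two _ F 0 (α + 1) _ R (Ne.symm hc) h hP0 hR0 (by linarith) hf2, rfl⟩
      · exact ⟨_, 1 + |(α + 1).re|, _, _, _, by positivity,
          aux_infty_two _ F (α + 1) 0 R _ hc h hR0 hP0 (by rw [Complex.zero_re]; linarith) hf1, rfl⟩
    · rcases le_total (α + 1).re (0 : ℂ).re with h | h
      · exact ⟨_, 1 + |(α + 1).re|, _, _, _, by linarith,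
          aux_zero_two _ F (α + 1) 0 R _ hc h hR0 hP0 (by rw [Complex.zero_re]; linarith) hf1, rfl⟩
      · exact ⟨_, 1 + |(α + 1).re|, _, _, _, by linarith,
          aux_zero_two _ F 0 (α + 1) _ R (Ne.symm hc) h hP0 hR0 (by linarith) hf2, rfl⟩

/-- **Vanishing of the regularized integral of `x^α log^k x`.**
If `Re α ≤ p - 1` and `Re α ≥ -q - 1` then `x ↦ x^α (log x)^k` belongs to `L_{p,q}`
and its regularized integral `⨍_0^∞ x^α (log x)^k dx` is zero: the contributions at
`0` and at `∞` cancel. -/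
theorem regInt_cpow_mul_log_pow_eq_zero (α : ℂ) (k : ℕ) (p q : ℝ)
    (hp : 0 < p) (hq : 0 < q) (h₁ : α.re ≤ p - 1) (h₂ : -q - 1 ≤ α.re) :
    MemLpq p q (fun x : ℝ => (x : ℂ) ^ α * ((Real.log x : ℝ) : ℂ) ^ k) ∧
    regInt (fun x : ℝ => (x : ℂ) ^ α * ((Real.log x : ℝ) : ℂ) ^ k) = 0 := by
  refine ⟨⟨⟨1, _, _, aux_zero_one p _ α (X ^ k) (pow_ne_zero _ X_ne_zero) h₁ fun x _ => by simp⟩,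
    ⟨1, _, _, aux_infty_one q _ α (X ^ k) (pow_ne_zero _ X_ne_zero) h₂ fun x _ => by simp⟩⟩,
    aux_regInt α k⟩

end
end

section
/- (Supplement to the Singular Asymptotics Lemma, real version) Let φ ∈ C([0,1]), and let ε > 0, T > 0, c > 0. Let σ: (0,1]×(0,1] → ℂ be measurable and satisfy |σ(x,ζ)| ≤ φ(x) ζ^{−1} for all 0 < ζ ≤ 1, 0 < x ≤ 1, and |σ(θ s, s)| ≤ c θ^{−T} s^{ε−1} for all 0 < θ ≤ 1, 0 < s ≤ 1. Then there is a constant C such that ∫_0^1 |σ(θ s, s)| ds ≤ C (1 + |ln θ|) for all 0 < θ ≤ 1; in particular ∫_0^1 |σ(θ s, s)| ds = O(|ln θ|) as θ → 0⁺. -/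
open MeasureTheory Set

/-- **Supplement to the Singular Asymptotics Lemma (real version).**
If `|σ(x,ζ)| ≤ φ(x) ζ⁻¹` on `(0,1] × (0,1]` with `φ` continuous on `[0,1]`, and
`|σ(θs, s)| ≤ c θ^{-T} s^{ε-1}` for `0 < θ ≤ 1`, `0 < s ≤ 1`, then
`∫_0^1 |σ(θs, s)| ds ≤ C (1 + |log θ|)` for all `0 < θ ≤ 1`; in particular
`∫_0^1 |σ(θs, s)| ds = O(|log θ|)` as `θ → 0⁺`. -/
theorem sal_supplement (φ : ℝ → ℝ) (hφ : ContinuousOn φ (Icc 0 1))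
    (ε T c : ℝ) (hε : 0 < ε) (hT : 0 < T) (hc : 0 < c)
    (σ : ℝ → ℝ → ℂ) (hmeas : Measurable (Function.uncurry σ))
    (h1 : ∀ x ζ : ℝ, 0 < x → x ≤ 1 → 0 < ζ → ζ ≤ 1 → ‖σ x ζ‖ ≤ φ x * ζ⁻¹)
    (h2 : ∀ θ s : ℝ, 0 < θ → θ ≤ 1 → 0 < s → s ≤ 1 →
      ‖σ (θ * s) s‖ ≤ c * θ ^ (-T) * s ^ (ε - 1)) :
    (∃ C : ℝ, ∀ θ : ℝ, 0 < θ → θ ≤ 1 →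
      (∫ s in Ioc (0:ℝ) 1, ‖σ (θ * s) s‖) ≤ C * (1 + |Real.log θ|)) ∧
    (∃ C' : ℝ, ∃ θ₀ ∈ Ioo (0:ℝ) 1, ∀ θ : ℝ, 0 < θ → θ < θ₀ →
      (∫ s in Ioc (0:ℝ) 1, ‖σ (θ * s) s‖) ≤ C' * |Real.log θ|) := by
  obtain ⟨M, hM⟩ := (isCompact_Icc (a := (0:ℝ)) (b := 1)).exists_bound_of_continuousOn hφ
  have hM0 : 0 ≤ M := le_trans (norm_nonneg _) (hM 0 (by simp))
  have key : ∀ θ : ℝ, 0 < θ → θ ≤ 1 →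
      (∫ s in Ioc (0:ℝ) 1, ‖σ (θ * s) s‖) ≤ (c / ε + M * (T / ε)) * (1 + |Real.log θ|) := by
    intro θ hθ hθ1
    have hm : Measurable (fun s : ℝ => ‖σ (θ * s) s‖) := by
      have : Measurable (fun s : ℝ => (θ * s, s)) := by fun_prop
      exact (hmeas.comp this).norm
    set δ : ℝ := θ ^ (T / ε) with hδ
    have hδ0 : 0 < δ := Real.rpow_pos_of_pos hθ _
    have hδ1 : δ ≤ 1 := Real.rpow_le_one hθ.le hθ1 (by positivity)
    have hg : ∀ a b : ℝ, IntervalIntegrable (fun s : ℝ => c * θ ^ (-T) * s ^ (ε - 1)) volume a b :=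
      fun a b => (intervalIntegral.intervalIntegrable_rpow' (by linarith)).const_mul _
    have hf : IntervalIntegrable (fun s : ℝ => ‖σ (θ * s) s‖) volume 0 1 := by
      rw [intervalIntegrable_iff_integrableOn_Ioc_of_le zero_le_one]
      refine Integrable.mono'
        ((intervalIntegrable_iff_integrableOn_Ioc_of_le zero_le_one).1 (hg 0 1))
        hm.aestronglyMeasurable ?_
      refine (ae_restrict_iff' measurableSet_Ioc).2 (Filter.Eventually.of_forall ?_)
      intro s hs
      rw [norm_norm]
      exact h2 θ s hθ hθ1 hs.1 hs.2
    have hf1 : IntervalIntegrable (fun s : ℝ => ‖σ (θ * s) s‖) volume 0 δ :=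
      hf.mono_set (by
        rw [uIcc_of_le hδ0.le, uIcc_of_le zero_le_one]; exact Icc_subset_Icc le_rfl hδ1)
    have hf2 : IntervalIntegrable (fun s : ℝ => ‖σ (θ * s) s‖) volume δ 1 :=
      hf.mono_set (by
        rw [uIcc_of_le hδ1, uIcc_of_le zero_le_one]; exact Icc_subset_Icc hδ0.le le_rfl)
    rw [← intervalIntegral.integral_of_le zero_le_one,
      ← intervalIntegral.integral_add_adjacent_intervals hf1 hf2]
    have b1 : (∫ s in (0:ℝ)..δ, ‖σ (θ * s) s‖) ≤ c / ε := by
      have : (∫ s in (0:ℝ)..δ, ‖σ (θ * s) s‖) ≤ ∫ s in (0:ℝ)..δ, c * θ ^ (-T) * s ^ (ε - 1) := by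
        refine intervalIntegral.integral_mono_on_of_le_Ioo hδ0.le hf1 (hg _ _) ?_
        intro s hs
        exact h2 θ s hθ hθ1 hs.1 (hs.2.le.trans hδ1)
      refine this.trans (le_of_eq ?_)
      rw [intervalIntegral.integral_const_mul, integral_rpow (Or.inl (by linarith))]
      have e1 : δ ^ ε = θ ^ T := by
        rw [hδ, ← Real.rpow_mul hθ.le, div_mul_cancel₀ _ hε.ne']
      rw [sub_add_cancel, Real.zero_rpow hε.ne', e1, Real.rpow_neg hθ.le]
      have := (Real.rpow_pos_of_pos hθ T).ne'
      field_simp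
      ring
    have b2 : (∫ s in δ..1, ‖σ (θ * s) s‖) ≤ M * (T / ε) * |Real.log θ| := by
      have hi : IntervalIntegrable (fun s : ℝ => M * s⁻¹) volume δ 1 := by
        refine (intervalIntegral.intervalIntegrable_inv ?_ continuousOn_id).const_mul _
        intro s hs
        rw [uIcc_of_le hδ1] at hs
        exact (hδ0.trans_le hs.1).ne'
      have : (∫ s in δ..1, ‖σ (θ * s) s‖) ≤ ∫ s in δ..1, M * s⁻¹ := by
        refine intervalIntegral.integral_mono_on hδ1 hf2 hi ?_
        intro s hs
        have hs0 : 0 < s := hδ0.trans_le hs.1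
        have hx1 : θ * s ≤ 1 := mul_le_one₀ hθ1 hs0.le hs.2
        refine (h1 (θ * s) s (by positivity) hx1 hs0 hs.2).trans ?_
        have := (le_abs_self _).trans (hM (θ * s) ⟨by positivity, hx1⟩)
        gcongr
      refine this.trans (le_of_eq ?_)
      rw [intervalIntegral.integral_const_mul, integral_inv_of_pos hδ0 one_pos, one_div,
        Real.log_inv, hδ, Real.log_rpow hθ, abs_of_nonpos (Real.log_nonpos hθ.le hθ1)]
      ring
    have p1 : 0 ≤ c / ε * |Real.log θ| := by positivity
    have p2 : 0 ≤ M * (T / ε) := by positivity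
    nlinarith
  refine ⟨⟨_, key⟩, 2 * (c / ε + M * (T / ε)), Real.exp (-1), ⟨Real.exp_pos _, ?_⟩, ?_⟩
  · rw [Real.exp_lt_one_iff]; norm_num
  · intro θ hθ hlt
    have hl : Real.log θ < -1 := (Real.log_lt_iff_lt_exp hθ).2 hlt
    have hθ1 : θ ≤ 1 := hlt.le.trans (Real.exp_le_one_iff.2 (by norm_num))
    refine (key θ hθ hθ1).trans ?_
    have ha : 1 ≤ |Real.log θ| := by rw [abs_of_neg (by linarith)]; linarith
    have p : 0 ≤ c / ε + M * (T / ε) := by positivity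
    nlinarith
end

section
/- Let u be the restriction to [0,∞)² of a smooth compactly supported function on ℝ². Then the integral f_*u(t) = ∫_0^∞ u(x, t/x) (1/x) dx converges for every t > 0, and f_*u(t) + u(0,0) ln t remains bounded as t → 0⁺; i.e., there are C > 0 and t₀ ∈ (0,1) with |f_*u(t) + u(0,0) ln t| ≤ C for 0 < t < t₀. -/
open MeasureTheory Set

/-- **Push-forward of a smooth compactly supported density under `f(x,y) = xy`.**
For `u` (the restriction to `[0,∞)²` of) a smooth compactly supported function on
`ℝ²`, the push-forward `(f_* u)(t) = ∫_0^∞ u(x, t/x) (1/x) dx` converges for every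
`t > 0`, and `(f_* u)(t) + u(0,0) log t` stays bounded as `t → 0⁺`. -/
theorem pushforward_smooth_log_bounded (u : ℝ → ℝ → ℂ)
    (hu : ContDiff ℝ (⊤ : ℕ∞) (Function.uncurry u))
    (hsupp : HasCompactSupport (Function.uncurry u)) :
    (∀ t : ℝ, 0 < t → IntegrableOn (fun x => u x (t / x) * (1 / (x : ℂ))) (Ioi 0)) ∧
    ∃ C > 0, ∃ t₀ ∈ Ioo (0:ℝ) 1, ∀ t : ℝ, 0 < t → t < t₀ →
      ‖(∫ x in Ioi (0:ℝ), u x (t / x) * (1 / (x : ℂ))) + u 0 0 * (Real.log t : ℂ)‖ ≤ C := by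
  obtain ⟨L, hL⟩ := ContDiff.lipschitzWith_of_hasCompactSupport hsupp hu (by simp)
  obtain ⟨R₀, hR₀⟩ := hsupp.isCompact.isBounded.exists_norm_le
  obtain ⟨R, hR1, hR⟩ : ∃ R : ℝ, 1 ≤ R ∧ ∀ x y : ℝ, R ≤ |x| ∨ R ≤ |y| → u x y = 0 := by
    refine ⟨max 1 (R₀ + 1), le_max_left _ _, fun x y h => ?_⟩
    by_contra hne
    have h1 := hR₀ (x, y) (subset_tsupport _ (by simpa [Function.mem_support] using hne))
    have h2 := norm_fst_le (x, y)
    have h3 := norm_snd_le (x, y)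
    simp only [Real.norm_eq_abs] at h2 h3
    have := le_max_right 1 (R₀ + 1)
    rcases h with h | h <;> linarith
  have hR0 : 0 < R := by linarith
  have hz : ∀ t : ℝ, 0 < t → ∀ x ∈ Ioi (0:ℝ), x ∉ Ioc (t / R) R →
      u x (t / x) * (1 / (x : ℂ)) = 0 := by
    intro t ht x hx hn
    have hx : 0 < x := hx
    rw [hR x (t / x), zero_mul]
    by_cases h : R ≤ x
    · left; exact h.trans (le_abs_self x)
    · right
      have : x ≤ t / R := by
        by_contra h'
        exact hn ⟨not_le.1 h', (not_le.1 h).le⟩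
      refine le_trans ?_ (le_abs_self _)
      rw [le_div_iff₀ hR0] at this
      rw [le_div_iff₀ hx]; linarith
  have hc : ∀ t : ℝ, 0 < t → ContinuousOn (fun x : ℝ => u x (t / x) * (1 / (x : ℂ))) (Ioi 0) := by
    intro t ht
    have h1 : ContinuousOn (fun x : ℝ => (x, t / x)) (Ioi 0) :=
      continuousOn_id.prodMk (continuousOn_const.div continuousOn_id fun x hx => (ne_of_gt hx))
    refine (hu.continuous.comp_continuousOn h1).mul
      (continuousOn_const.div Complex.continuous_ofReal.continuousOn fun x hx => ?_)
    exact_mod_cast ne_of_gt (show 0 < x from hx)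
  have hsub : ∀ t : ℝ, 0 < t → Ioc (t / R) R ⊆ Ioi 0 := fun t ht x hx =>
    (div_pos ht hR0).trans hx.1
  have hsub' : ∀ t : ℝ, 0 < t → Icc (t / R) R ⊆ Ioi 0 := fun t ht x hx =>
    (div_pos ht hR0).trans_le hx.1
  have hint : ∀ t : ℝ, 0 < t →
      IntegrableOn (fun x => u x (t / x) * (1 / (x : ℂ))) (Ioc (t / R) R) := fun t ht =>
    (((hc t ht).mono (hsub' t ht)).integrableOn_Icc).mono_set Ioc_subset_Icc_self
  refine ⟨fun t ht => ?_, 2 * L * R + ‖u 0 0‖ * (2 * Real.log R) + 1, ?_, 1 / 2, by norm_num, ?_⟩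
  · exact (hint t ht).of_forall_sdiff_eq_zero measurableSet_Ioi
      fun x hx => hz t ht x hx.1 hx.2
  · have := Real.log_nonneg hR1
    positivity
  intro t ht ht2
  have hab : t / R ≤ R := by
    rw [div_le_iff₀ hR0]; nlinarith
  have ha : 0 < t / R := div_pos ht hR0
  have hu0 : uIcc (t / R) R ⊆ Ioi 0 := by rw [uIcc_of_le hab]; exact hsub' t ht
  have hne : ∀ x ∈ uIcc (t / R) R, x ≠ 0 := fun x hx => ne_of_gt (hu0 hx)
  rw [setIntegral_eq_of_subset_of_forall_sdiff_eq_zero measurableSet_Ioi (hsub t ht)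
      fun x hx => hz t ht x hx.1 hx.2, ← intervalIntegral.integral_of_le hab]
  have hi1 : IntervalIntegrable (fun x => u x (t / x) * (1 / (x : ℂ))) volume (t / R) R :=
    ((hc t ht).mono hu0).intervalIntegrable
  have hi2 : IntervalIntegrable (fun x : ℝ => u 0 0 * (1 / (x : ℂ))) volume (t / R) R := by
    refine ContinuousOn.intervalIntegrable (continuousOn_const.mul
      (continuousOn_const.div Complex.continuous_ofReal.continuousOn fun x hx => ?_))
    exact_mod_cast hne x hx
  have hlog : ∫ x in (t / R)..R, u 0 0 * (1 / (x : ℂ)) = u 0 0 * (2 * Real.log R - Real.log t : ℝ) := by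
    rw [intervalIntegral.integral_const_mul]
    congr 1
    have : ∀ x : ℝ, 1 / (x : ℂ) = ((1 / x : ℝ) : ℂ) := fun x => by push_cast; rfl
    simp_rw [this]
    rw [intervalIntegral.integral_ofReal, integral_one_div_of_pos ha hR0,
      Real.log_div hR0.ne' ha.ne', Real.log_div ht.ne' hR0.ne']
    congr 1; ring
  have hd := intervalIntegral.integral_sub hi1 hi2
  rw [hlog] at hd
  have key : ‖∫ x in (t / R)..R, (u x (t / x) * (1 / (x : ℂ)) - u 0 0 * (1 / (x : ℂ)))‖
      ≤ 2 * L * R := by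
    have hgc : ContinuousOn (fun x : ℝ => L * (1 + t / x ^ 2)) (uIcc (t / R) R) :=
      continuousOn_const.mul (continuousOn_const.add (continuousOn_const.div
        (continuousOn_id.pow 2) fun x hx => pow_ne_zero 2 (hne x hx)))
    have hF : ∫ x in (t / R)..R, L * (1 + t / x ^ 2) = L * (R - t / R) - L * (t / R - t / (t / R)) := by
      refine intervalIntegral.integral_eq_sub_of_hasDerivAt (f := fun x => L * (x - t / x))
        (fun x hx => ?_) hgc.intervalIntegrable
      have := ((hasDerivAt_id x).sub ((hasDerivAt_const x t).div (hasDerivAt_id x) (hne x hx))).const_mul (L : ℝ)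
      refine HasDerivAt.congr_deriv this ?_
      simp only [id]
      ring
    refine (intervalIntegral.norm_integral_le_of_norm_le hab ?_ hgc.intervalIntegrable).trans ?_
    · refine Filter.Eventually.of_forall fun x hx => ?_
      have hx0 : 0 < x := hsub t ht hx
      have h := hL.dist_le_mul (x, t / x) (0, 0)
      rw [dist_eq_norm, dist_eq_norm] at h
      have h2 : ‖((x, t / x) : ℝ × ℝ) - (0, 0)‖ ≤ x + t / x := by
        have : 0 < t / x := div_pos ht hx0
        simp [Prod.norm_def, abs_of_pos hx0, abs_of_pos ht]
        constructor <;> linarith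
      have h3 : ‖u x (t / x) - u 0 0‖ ≤ L * (x + t / x) :=
        h.trans (mul_le_mul_of_nonneg_left h2 L.2)
      rw [← sub_mul, norm_mul]
      have h4 : ‖(1 / (x : ℂ))‖ = 1 / x := by simp [abs_of_pos hx0]
      rw [h4]
      calc _ ≤ L * (x + t / x) * (1 / x) := by gcongr
        _ = _ := by field_simp
    · rw [hF]
      have : t / (t / R) = R := by field_simp
      rw [this]
      have := mul_nonneg L.2 ha.le
      change 0 ≤ (L : ℝ) * (t / R) at this
      nlinarith
  have heq : (∫ x in (t / R)..R, u x (t / x) * (1 / (x : ℂ))) + u 0 0 * (Real.log t : ℂ)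
      = (∫ x in (t / R)..R, (u x (t / x) * (1 / (x : ℂ)) - u 0 0 * (1 / (x : ℂ))))
        + u 0 0 * ((2 * Real.log R : ℝ) : ℂ) := by
    rw [hd]; push_cast; ring
  rw [heq]
  refine (norm_add_le _ _).trans ?_
  rw [norm_mul, Complex.norm_real, Real.norm_of_nonneg (by have := Real.log_nonneg hR1; positivity)]
  linarith
end

section
/- Let u be the restriction to [0,∞)² of a smooth compactly supported function on ℝ², and set f_*u(t) = ∫_0^∞ u(x, t/x) (1/x) dx for t > 0. For j ∈ ℕ₀ define a_j = −∫_0^∞ (ζ^{j−1}/j!) ∂_1^j u(0, 1/ζ) dζ, b_j = −∫_0^∞ (x^{−1−j}/j!) ∂_2^j u(x, 0) dx, and c_j = (1/(j!)²) ∂_1^j ∂_2^j u(0,0), where ∂_1, ∂_2 are the partial derivatives of u and −∫ denotes the regularized integral (each integrand lies in a class L_{p',q'} because u is smooth with compact support, so these are defined). Then f_*u has the complete asymptotic expansion f_*u(t) ∼ Σ_{j≥0} t^j ( a_j + b_j − c_j ln t ) as t → 0⁺; precisely, for every N ∈ ℕ there are C > 0 and t₀ ∈ (0,1) such that | f_*u(t)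 − Σ_{j=0}^{N−1} t^j ( a_j + b_j − c_j ln t ) | ≤ C t^N (1 + |ln t|) for all 0 < t < t₀. -/
open MeasureTheory Set Polynomial Filter
open scoped Topology Classical

noncomputable section

/-- functions integrable near infinity -/
def intSub : Submodule ℂ (ℝ → ℂ) where
  carrier := {f | ∃ a : ℝ, IntegrableOn f (Ioi a)}
  zero_mem' := ⟨0, integrableOn_zero⟩
  add_mem' := by
    rintro f g ⟨a, ha⟩ ⟨b, hb⟩
    exact ⟨max a b, (ha.mono_set (Ioi_subset_Ioi (le_max_left _ _))).add
      (hb.mono_set (Ioi_subset_Ioi (le_max_right _ _)))⟩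
  smul_mem' := by
    rintro c f ⟨a, ha⟩
    exact ⟨a, ha.smul c⟩

/-- shift operator -/
def shiftOp (h : ℝ) : Module.End ℂ (ℝ → ℂ) where
  toFun f := fun s => f (s + h)
  map_add' _ _ := rfl
  map_smul' _ _ := rfl

lemma shift_mem (h : ℝ) : intSub ≤ intSub.comap (shiftOp h) := by
  rintro f ⟨a, ha⟩
  refine ⟨a - h, ?_⟩
  have := (measurePreserving_add_right (volume : Measure ℝ) h).integrableOn_comp_preimage
    (measurableEmbedding_addRight h) (f := f) (s := Ioi a)
  have h2 := this.2 ha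
  simpa [shiftOp, Function.comp_def] using h2

/-- exponential polynomial -/
def expPoly (c : ℂ) (P : ℂ[X]) : ℝ → ℂ := fun s => Complex.exp (c * s) * P.eval (s : ℂ)

lemma shift_expPoly (h : ℝ) (c : ℂ) (P : ℂ[X]) :
    (shiftOp h - Complex.exp (c * h) • (1 : Module.End ℂ (ℝ → ℂ))) (expPoly c P)
      = Complex.exp (c * h) • expPoly c (taylor (h : ℂ) P - P) := by
  ext s
  simp [shiftOp, expPoly, taylor_eval, mul_add, Complex.exp_add]
  ring

lemma expPoly_gen (h : ℝ) (c : ℂ) (n : ℕ) : ∀ P : ℂ[X], P.degree < n →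
    ((shiftOp h - Complex.exp (c * h) • (1 : Module.End ℂ (ℝ → ℂ))) ^ n) (expPoly c P) = 0 := by
  induction n with
  | zero =>
    intro P hP
    have : P = 0 := by
      rw [← degree_eq_bot]
      have : P.degree < 0 := by simpa using hP
      exact Nat.WithBot.lt_zero_iff.1 this
    subst this
    ext s; simp [expPoly]
  | succ n ih =>
    intro P hP
    rw [pow_succ, Module.End.mul_apply, shift_expPoly, map_smul, ih, smul_zero]
    by_cases h0 : P = 0
    · subst h0; simp
    have h1 : (taylor (h : ℂ) P - P).degree < P.degree := by
      have := degree_sub_lt_left (degree_taylor P (h : ℂ)) (by simpa using h0) (leadingCoeff_taylor (r := (h:ℂ)) (f := P))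
      rwa [degree_taylor] at this
    have h2 : P.degree ≤ n := by
      rw [degree_eq_natDegree h0] at hP ⊢
      have : P.natDegree < n + 1 := by exact_mod_cast hP
      exact_mod_cast Nat.lt_succ_iff.1 this
    exact lt_of_lt_of_le h1 h2

lemma expPoly_not_int (c : ℂ) (hc : 0 ≤ c.re) (P : ℂ[X]) (hP : expPoly c P ∈ intSub) : P = 0 := by
  by_contra h0
  obtain ⟨a, ha⟩ := hP
  -- eventually norm P >= some constant
  have key : ∃ δ > 0, ∃ b : ℝ, ∀ s : ℝ, b ≤ s → δ ≤ ‖P.eval (s : ℂ)‖ := by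
    by_cases hd : P.degree ≤ 0
    · rw [eq_C_of_degree_le_zero hd] at h0 ⊢
      refine ⟨‖P.coeff 0‖, ?_, 0, fun s _ => by simp⟩
      simpa using h0
    · have ht : Tendsto (fun s : ℝ => ‖P.eval (s : ℂ)‖) atTop atTop := by
        refine P.tendsto_norm_atTop (not_le.1 hd) ?_
        simpa using tendsto_abs_atTop_atTop
      obtain ⟨b, hb⟩ := eventually_atTop.1 (ht.eventually_ge_atTop 1)
      exact ⟨1, one_pos, b, hb⟩
  obtain ⟨δ, hδ, b, hb⟩ := key
  set m := max (max a b) 0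
  have h1 : IntegrableOn (fun _ : ℝ => δ) (Ioi m) := by
    refine Integrable.mono' (ha.mono_set (Ioi_subset_Ioi (by simp [m]))).norm (by fun_prop) ?_
    filter_upwards [ae_restrict_mem measurableSet_Ioi] with s hs
    have hs1 : b ≤ s := le_trans (by simp [m]) (le_of_lt hs)
    have hs0 : 0 ≤ s := le_trans (by simp [m]) (le_of_lt hs)
    rw [expPoly, norm_mul, Complex.norm_exp, Real.norm_of_nonneg hδ.le]
    have : 1 ≤ Real.exp ((c * s).re) := by
      apply Real.one_le_exp
      simp
      positivity
    nlinarith [hb s hs1]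
  rw [integrableOn_const_iff] at h1
  simp [hδ.ne'] at h1

lemma exists_shift (S : Finset ℂ) : ∃ h : ℝ, ∀ a ∈ S, ∀ b ∈ S,
    Complex.exp (a * h) = Complex.exp (b * h) → a = b := by
  set B : ℝ := 1 + ∑ a ∈ S, ‖a‖ with hB
  have hs : 0 ≤ ∑ a ∈ S, ‖a‖ := Finset.sum_nonneg fun _ _ => norm_nonneg _
  have hB0 : 0 < B := by linarith
  refine ⟨1 / B, fun a ha b hb hab => ?_⟩
  have bd : ∀ c ∈ S, ‖c * ((1 / B : ℝ) : ℂ)‖ ≤ 1 := by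
    intro c hc
    have : ‖c‖ ≤ ∑ a ∈ S, ‖a‖ := Finset.single_le_sum (f := fun a : ℂ => ‖a‖) (fun _ _ => norm_nonneg _) hc
    rw [norm_mul, Complex.norm_real, Real.norm_of_nonneg (by positivity), mul_one_div, div_le_one hB0]
    linarith
  have im : ∀ c ∈ S, |(c * ((1 / B : ℝ) : ℂ)).im| ≤ 1 := fun c hc =>
    (Complex.abs_im_le_norm _).trans (bd c hc)
  have h3 := Real.pi_gt_three
  have e := Complex.exp_inj_of_neg_pi_lt_of_le_pi (by linarith [(abs_le.1 (im a ha)).1])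
    (by linarith [(abs_le.1 (im a ha)).2]) (by linarith [(abs_le.1 (im b hb)).1])
    (by linarith [(abs_le.1 (im b hb)).2]) hab
  have : ((1 / B : ℝ) : ℂ) ≠ 0 := by
    rw [Complex.ofReal_ne_zero]; positivity
  exact mul_right_cancel₀ this e

lemma expPoly_unique (S : Finset ℂ) (P : ℂ → ℂ[X])
    (hint : (∑ c ∈ S, expPoly c (P c)) ∈ intSub) : ∀ c ∈ S, 0 ≤ c.re → P c = 0 := by
  obtain ⟨h, hh⟩ := exists_shift S
  let T : Module.End ℂ ((ℝ → ℂ) ⧸ intSub) := intSub.mapQ intSub (shiftOp h) (shift_mem h)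
  have hind := Module.End.independent_maxGenEigenspace T
  intro c hc hre
  apply expPoly_not_int c hre
  rw [← Submodule.Quotient.mk_eq_zero]
  let lam : ℂ → ℂ := fun c => Complex.exp (c * h)
  have hinj : Set.InjOn lam S := fun a ha b hb hab => hh a ha b hb hab
  -- powers commute with quotient
  have hpow : ∀ (m : ℂ) (n : ℕ) (v : ℝ → ℂ),
      ((T - m • (1 : Module.End ℂ ((ℝ → ℂ) ⧸ intSub))) ^ n) (intSub.mkQ v)
        = intSub.mkQ (((shiftOp h - m • (1 : Module.End ℂ (ℝ → ℂ))) ^ n) v) := by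
    intro m n
    induction n with
    | zero => intro v; simp
    | succ n ih =>
      intro v
      rw [pow_succ, pow_succ, Module.End.mul_apply, Module.End.mul_apply, ← ih]
      congr 1
  have hmem : ∀ c, intSub.mkQ (expPoly c (P c)) ∈ T.maxGenEigenspace (lam c) := by
    intro c
    rw [Module.End.mem_maxGenEigenspace]
    refine ⟨(P c).natDegree + 1, ?_⟩
    rw [hpow, expPoly_gen, map_zero]
    exact lt_of_le_of_lt degree_le_natDegree (by exact_mod_cast Nat.lt_succ_self _)
  have hind2 := hind.comp (f := fun c : S => lam c)
    (fun a b hab => Subtype.ext (hinj a.2 b.2 hab))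
  rw [iSupIndep_iff_finsetSum_eq_zero_imp_eq_zero] at hind2
  refine hind2 Finset.univ (fun c : S => intSub.mkQ (expPoly c (P c))) (fun i _ => hmem i) ?_
    ⟨c, hc⟩ (Finset.mem_univ _)
  rw [Finset.sum_coe_sort S (fun c => intSub.mkQ (expPoly c (P c))), ← map_sum,
    Submodule.mkQ_apply, Submodule.Quotient.mk_eq_zero]
  exact hint

lemma sum_coeffPolyAt {N : ℕ} (γ : Fin N → ℂ) (R : Fin N → ℂ[X]) (S : Finset ℂ)
    (hS : ∀ j, γ j ∈ S) (s : ℝ) :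
    ∑ c ∈ S, expPoly c (coeffPolyAt c γ R) s = ∑ j, Complex.exp (γ j * s) * (R j).eval (s : ℂ) := by
  simp only [expPoly, coeffPolyAt, eval_finsetSum, Finset.mul_sum]
  rw [Finset.sum_comm]
  refine Finset.sum_congr rfl fun j _ => ?_
  rw [Finset.sum_eq_single (γ j)]
  · simp
  · intro b _ hb
    simp [Ne.symm hb]
  · intro h; exact absurd (hS j) h

/-- expansion in logarithmic variable -/
def LogExp (ρ : ℝ) (g : ℝ → ℂ) {N : ℕ} (γ : Fin N → ℂ) (R : Fin N → ℂ[X]) : Prop :=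
  ∃ w : ℝ → ℂ, IntegrableOn w (Ioi 0) ∧ ∀ s : ℝ, 0 < s →
    g s = (∑ j, Complex.exp (γ j * s) * (R j).eval (s : ℂ)) + (Real.exp (-ρ * s) : ℝ) * w s

lemma LogExp.integrable_aux {ρ : ℝ} (hρ : 0 ≤ ρ) {w : ℝ → ℂ} (hw : IntegrableOn w (Ioi 0)) :
    IntegrableOn (fun s : ℝ => (Real.exp (-ρ * s) : ℝ) * w s) (Ioi 0) := by
  refine Integrable.mono hw (AEStronglyMeasurable.mul (Continuous.aestronglyMeasurable (by fun_prop)) hw.1) ?_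
  filter_upwards [ae_restrict_mem measurableSet_Ioi] with s hs
  rw [norm_mul, Complex.norm_real, Real.norm_of_nonneg (Real.exp_pos _).le]
  have : Real.exp (-ρ * s) ≤ 1 := by
    apply Real.exp_le_one_iff.2
    have : 0 < s := hs
    nlinarith [mul_nonneg hρ this.le]
  nlinarith [norm_nonneg (w s)]

lemma LogExp.unique {ρ ρ' : ℝ} (hρ : 0 ≤ ρ) (hρ' : 0 ≤ ρ') {g : ℝ → ℂ} {N N' : ℕ}
    {γ : Fin N → ℂ} {R : Fin N → ℂ[X]} {γ' : Fin N' → ℂ} {R' : Fin N' → ℂ[X]}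
    (h : LogExp ρ g γ R) (h' : LogExp ρ' g γ' R') :
    coeffPolyAt 0 γ R = coeffPolyAt 0 γ' R' := by
  obtain ⟨w, hw, e⟩ := h
  obtain ⟨w', hw', e'⟩ := h'
  let S : Finset ℂ := insert 0 (Finset.univ.image γ ∪ Finset.univ.image γ')
  have key := expPoly_unique S (fun c => coeffPolyAt c γ R - coeffPolyAt c γ' R') ?_ 0
    (by simp [S]) (by simp)
  · exact sub_eq_zero.1 key
  refine ⟨0, ?_⟩
  refine IntegrableOn.congr_fun ((LogExp.integrable_aux hρ' hw').sub (LogExp.integrable_aux hρ hw)) ?_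
    measurableSet_Ioi
  intro s hs
  have h1 := sum_coeffPolyAt γ R S (by intro j; simp [S]) s
  have h2 := sum_coeffPolyAt γ' R' S (by intro j; simp [S]) s
  have h3 : (∑ c ∈ S, expPoly c (coeffPolyAt c γ R - coeffPolyAt c γ' R')) s
      = ∑ c ∈ S, expPoly c (coeffPolyAt c γ R) s - ∑ c ∈ S, expPoly c (coeffPolyAt c γ' R') s := by
    rw [Finset.sum_apply, ← Finset.sum_sub_distrib]
    refine Finset.sum_congr rfl fun c _ => ?_
    simp [expPoly, mul_sub]
  rw [h3, h1, h2]
  simp only [Pi.sub_apply]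
  linear_combination e s hs - e' s hs

lemma ExpandsAtInfty.logExp {q : ℝ} {f : ℝ → ℂ} {M : ℕ} {β : Fin M → ℂ} {Q : Fin M → ℂ[X]}
    (h : ExpandsAtInfty q f β Q) : LogExp (q + 1) (fun s => f (Real.exp s)) β Q := by
  obtain ⟨-, -, -, -, f₂, hi, e⟩ := h
  refine ⟨fun s => (Real.exp s : ℝ) * f₂ (Real.exp s), ?_, ?_⟩
  · have := (integrableOn_image_iff_integrableOn_abs_deriv_smul (f := Real.exp) (f' := Real.exp)
      (s := Ioi 0) measurableSet_Ioi (fun x _ => (Real.hasDerivAt_exp x).hasDerivWithinAt)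
      Real.exp_injective.injOn f₂).1 (hi.mono_set (by
        rintro _ ⟨s, hs, rfl⟩
        exact Real.one_le_exp (le_of_lt hs)))
    simpa [abs_of_pos (Real.exp_pos _)] using this
  · intro s hs
    simp only
    rw [e _ (Real.exp_pos s)]
    have h1 : ∀ c : ℂ, ((Real.exp s : ℝ) : ℂ) ^ c = Complex.exp (c * s) := by
      intro c
      rw [Complex.cpow_def_of_ne_zero (by exact_mod_cast (Real.exp_pos s).ne'),
        ← Complex.ofReal_log (Real.exp_pos s).le, Real.log_exp, mul_comm]
    simp only [h1, Real.log_exp]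
    congr 1
    rw [← mul_assoc, ← Complex.ofReal_mul, ← Real.exp_add, ← Real.exp_mul]
    congr 3
    ring

lemma ExpandsAtZero.logExp {p : ℝ} {f : ℝ → ℂ} {N : ℕ} {α : Fin N → ℂ} {P : Fin N → ℂ[X]}
    (h : ExpandsAtZero p f α P) :
    LogExp (p - 1) (fun s => f (Real.exp (-s))) (fun j => -α j) (fun j => (P j).comp (-X)) := by
  obtain ⟨-, -, -, -, f₁, hi, e⟩ := h
  refine ⟨fun s => (Real.exp (-s) : ℝ) * f₁ (Real.exp (-s)), ?_, ?_⟩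
  · have hi' : IntegrableOn f₁ (Icc 0 1) :=
      hi.integrableOn_compact_subset (fun x hx => hx.1) isCompact_Icc
    have := (integrableOn_image_iff_integrableOn_abs_deriv_smul (f := fun s => Real.exp (-s))
      (f' := fun s => - Real.exp (-s))
      (s := Ioi 0) measurableSet_Ioi (fun x _ => by
        have := (hasDerivAt_neg x).exp
        simpa using this.hasDerivWithinAt)
      (fun a _ b _ hab => by simpa using hab) f₁).1 (hi'.mono_set (by
        rintro _ ⟨s, hs, rfl⟩
        refine ⟨(Real.exp_pos _).le, Real.exp_le_one_iff.2 ?_⟩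
        have : 0 < s := hs
        linarith))
    simpa [abs_of_pos (Real.exp_pos _)] using this
  · intro s hs
    simp only
    rw [e _ (Real.exp_pos _)]
    have h1 : ∀ c : ℂ, ((Real.exp (-s) : ℝ) : ℂ) ^ c = Complex.exp (-c * s) := by
      intro c
      rw [Complex.cpow_def_of_ne_zero (by exact_mod_cast (Real.exp_pos _).ne'),
        ← Complex.ofReal_log (Real.exp_pos _).le, Real.log_exp]
      push_cast
      ring_nf
    simp only [h1, Real.log_exp]
    congr 1
    · simp
    rw [← mul_assoc, ← Complex.ofReal_mul, ← Real.exp_add, ← Real.exp_mul]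
    congr 3
    ring

lemma IsLimInfty.unique {f : ℝ → ℂ} {L L' : ℂ} (h : IsLimInfty f L) (h' : IsLimInfty f L') :
    L = L' := by
  obtain ⟨q, M, β, Q, hq, hE, rfl⟩ := h
  obtain ⟨q', M', β', Q', hq', hE', rfl⟩ := h'
  rw [LogExp.unique (by linarith) (by linarith) hE.logExp hE'.logExp]

lemma coeffPolyAt_neg {N : ℕ} (α : Fin N → ℂ) (P : Fin N → ℂ[X]) :
    (coeffPolyAt 0 (fun j => -α j) (fun j => (P j).comp (-X))).coeff 0 = (coeffPolyAt 0 α P).coeff 0 := by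
  simp only [coeffPolyAt, finsetSum_coeff]
  refine Finset.sum_congr rfl fun j _ => ?_
  by_cases h : α j = 0
  · simp [h, coeff_zero_eq_eval_zero]
  · simp [h]

lemma IsLimZero.unique {f : ℝ → ℂ} {L L' : ℂ} (h : IsLimZero f L) (h' : IsLimZero f L') :
    L = L' := by
  obtain ⟨q, M, β, Q, hq, hE, rfl⟩ := h
  obtain ⟨q', M', β', Q', hq', hE', rfl⟩ := h'
  rw [← coeffPolyAt_neg, ← coeffPolyAt_neg β',
    LogExp.unique (by linarith) (by linarith) hE.logExp hE'.logExp]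

lemma IsLimZero.limZero_eq {f : ℝ → ℂ} {L : ℂ} (h : IsLimZero f L) : limZero f = L := by
  have hex : ∃ L, IsLimZero f L := ⟨L, h⟩
  rw [limZero, dif_pos hex]
  exact hex.choose_spec.unique h

lemma IsLimInfty.limInfty_eq {f : ℝ → ℂ} {L : ℂ} (h : IsLimInfty f L) : limInfty f = L := by
  have hex : ∃ L, IsLimInfty f L := ⟨L, h⟩
  rw [limInfty, dif_pos hex]
  exact hex.choose_spec.unique h


lemma filter_sum_aux {m : ℕ} (P : Fin m → ℂ[X]) (F : Finset (Fin m))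
    (hF : F = Finset.univ.filter (fun i => P i ≠ 0)) (G : Fin m → ℂ[X] → ℂ) (hG : ∀ i, G i 0 = 0) :
    ∑ k : Fin F.card, G (F.orderEmbOfFin rfl k) (P (F.orderEmbOfFin rfl k)) = ∑ i, G i (P i) := by
  have h1 : ∑ k : Fin F.card, G (F.orderEmbOfFin rfl k) (P (F.orderEmbOfFin rfl k))
      = ∑ i ∈ F, G i (P i) := by
    rw [← Finset.sum_coe_sort F (fun i => G i (P i))]
    exact Fintype.sum_equiv (F.orderIsoOfFin rfl).toEquiv _ _ (fun k => rfl)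
  rw [h1]
  refine Finset.sum_subset (Finset.subset_univ _) fun i _ hi => ?_
  have : P i = 0 := by
    by_contra h
    exact hi (by simp [hF, h])
  rw [this, hG]

lemma coeffPolyAt_filter {m : ℕ} (a : Fin m → ℤ) (P : Fin m → ℂ[X]) (F : Finset (Fin m))
    (hF : F = Finset.univ.filter (fun i => P i ≠ 0)) (ha : Function.Injective a)
    (i0 : Fin m) (h0 : a i0 = 0) :
    (coeffPolyAt 0 (fun k : Fin F.card => ((a (F.orderEmbOfFin rfl k) : ℤ) : ℂ))
      (fun k => P (F.orderEmbOfFin rfl k))).coeff 0 = (P i0).coeff 0 := by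
  rw [coeffPolyAt, finsetSum_coeff,
    filter_sum_aux P F hF (fun i R => (if ((a i : ℤ) : ℂ) = 0 then R else 0).coeff 0) (by simp)]
  rw [Finset.sum_eq_single i0]
  · simp [h0]
  · intro b _ hb
    have : a b ≠ 0 := fun h => hb (ha (h.trans h0.symm))
    simp [this]
  · simp

lemma isLimZero_of_bound {m : ℕ} (a : Fin m → ℤ) (P : Fin m → ℂ[X]) (ha : StrictMono a)
    (ha0 : ∀ i, a i ≤ 0) (i0 : Fin m) (h0 : a i0 = 0) (f : ℝ → ℂ) (hf : ContinuousOn f (Ioi 0))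
    (δ C : ℝ) (hδ : 0 < δ)
    (hb : ∀ x : ℝ, 0 < x → x ≤ δ →
      ‖f x - ∑ i, (x : ℂ) ^ (a i) * (P i).eval ((Real.log x : ℝ) : ℂ)‖ ≤ C * x) :
    IsLimZero f ((P i0).coeff 0) := by
  set F : Finset (Fin m) := Finset.univ.filter (fun i => P i ≠ 0) with hF
  have hcont : ContinuousOn (fun x : ℝ =>
      (x : ℂ)⁻¹ * (f x - ∑ i, (x : ℂ) ^ (a i) * (P i).eval ((Real.log x : ℝ) : ℂ))) (Ioi 0) := by
    have hne : ∀ x ∈ Ioi (0:ℝ), (x : ℂ) ≠ 0 := fun x hx => by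
      exact_mod_cast (ne_of_gt hx)
    have hid : ContinuousOn (fun x : ℝ => (x : ℂ)) (Ioi 0) := Complex.continuous_ofReal.continuousOn
    refine (hid.inv₀ hne).mul (hf.sub (continuousOn_finsetSum _ fun i _ => ?_))
    refine (hid.zpow₀ _ fun x hx => Or.inl (hne x hx)).mul ?_
    refine (P i).continuous.comp_continuousOn (Complex.continuous_ofReal.comp_continuousOn ?_)
    exact Real.continuousOn_log.mono fun x hx => ne_of_gt hx
  refine ⟨1, F.card, fun k => ((a (F.orderEmbOfFin rfl k) : ℤ) : ℂ),
    fun k => P (F.orderEmbOfFin rfl k), le_rfl, ⟨?_, ?_, ?_, ?_, ?_⟩, ?_⟩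
  · intro k l hkl
    simp only [Complex.intCast_re]
    exact_mod_cast ha.monotone ((F.orderEmbOfFin rfl).monotone hkl)
  · intro k l hkl
    simp only [Int.cast_inj] at hkl
    exact (F.orderEmbOfFin rfl).injective (ha.injective hkl)
  · intro k
    simp only [Complex.intCast_re, sub_self]
    exact_mod_cast ha0 _
  · intro k
    have := F.orderEmbOfFin_mem rfl k
    exact (Finset.mem_filter.1 this).2
  · refine ⟨fun x : ℝ => (x : ℂ)⁻¹ * (f x - ∑ i, (x : ℂ) ^ (a i) * (P i).eval ((Real.log x : ℝ) : ℂ)), ?_, ?_⟩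
    · intro x hx
      rcases eq_or_lt_of_le (show 0 ≤ x from hx) with rfl | hx
      · refine ⟨Icc 0 δ, ?_, ?_⟩
        · have := inter_mem_nhdsWithin (Ici (0:ℝ)) (Iic_mem_nhds hδ)
          simpa [Ici_inter_Iic] using this
        · rw [integrableOn_Icc_iff_integrableOn_Ioc]
          refine Integrable.mono' (g := fun _ => C) (integrableOn_const (by simp))
            ((hcont.mono fun x hx => hx.1).aestronglyMeasurable measurableSet_Ioc) ?_
          filter_upwards [ae_restrict_mem measurableSet_Ioc] with x hx
          rw [norm_mul, norm_inv, Complex.norm_real, Real.norm_of_nonneg hx.1.le,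
            inv_mul_le_iff₀ hx.1, mul_comm x]
          exact hb x hx.1 hx.2
      · have h1 : LocallyIntegrableOn (fun x : ℝ =>
            (x : ℂ)⁻¹ * (f x - ∑ i, (x : ℂ) ^ (a i) * (P i).eval ((Real.log x : ℝ) : ℂ))) (Ioi 0) :=
          hcont.locallyIntegrableOn measurableSet_Ioi
        have h2 := h1 x hx
        have h3 : 𝓝[Ioi 0] x = 𝓝 x := isOpen_Ioi.nhdsWithin_eq hx
        rw [h3] at h2
        exact h2.filter_mono nhdsWithin_le_nhds
    · intro x hx
      have hxc : (x : ℂ) ≠ 0 := by exact_mod_cast hx.ne'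
      have := filter_sum_aux P F hF (fun i R => (x : ℂ) ^ ((a i : ℤ) : ℂ) * R.eval ((Real.log x : ℝ) : ℂ)) (by simp)
      rw [this]
      simp only [Complex.cpow_intCast, Real.rpow_one]
      rw [mul_inv_cancel_left₀ hxc]
      ring
  · exact coeffPolyAt_filter a P F hF ha.injective i0 h0

lemma isLimInfty_of_bound {m : ℕ} (a : Fin m → ℤ) (P : Fin m → ℂ[X]) (ha : StrictAnti a)
    (ha0 : ∀ i, -2 ≤ a i) (i0 : Fin m) (h0 : a i0 = 0) (f : ℝ → ℂ) (hf : ContinuousOn f (Ioi 0))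
    (δ C : ℝ) (hδ : 1 ≤ δ)
    (hb : ∀ x : ℝ, δ ≤ x →
      ‖f x - ∑ i, (x : ℂ) ^ (a i) * (P i).eval ((Real.log x : ℝ) : ℂ)‖ ≤ C * x ^ (-3 : ℝ)) :
    IsLimInfty f ((P i0).coeff 0) := by
  set F : Finset (Fin m) := Finset.univ.filter (fun i => P i ≠ 0) with hF
  have hcont : ContinuousOn (fun x : ℝ =>
      (x : ℂ) * (f x - ∑ i, (x : ℂ) ^ (a i) * (P i).eval ((Real.log x : ℝ) : ℂ))) (Ioi 0) := by
    have hne : ∀ x ∈ Ioi (0:ℝ), (x : ℂ) ≠ 0 := fun x hx => by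
      exact_mod_cast (ne_of_gt hx)
    have hid : ContinuousOn (fun x : ℝ => (x : ℂ)) (Ioi 0) := Complex.continuous_ofReal.continuousOn
    refine hid.mul (hf.sub (continuousOn_finsetSum _ fun i _ => ?_))
    refine (hid.zpow₀ _ fun x hx => Or.inl (hne x hx)).mul ?_
    refine (P i).continuous.comp_continuousOn (Complex.continuous_ofReal.comp_continuousOn ?_)
    exact Real.continuousOn_log.mono fun x hx => ne_of_gt hx
  refine ⟨1, F.card, fun k => ((a (F.orderEmbOfFin rfl k) : ℤ) : ℂ),
    fun k => P (F.orderEmbOfFin rfl k), one_pos, ⟨?_, ?_, ?_, ?_, ?_⟩, ?_⟩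
  · intro k l hkl
    simp only [Complex.intCast_re]
    exact_mod_cast ha.antitone ((F.orderEmbOfFin rfl).monotone hkl)
  · intro k l hkl
    simp only [Int.cast_inj] at hkl
    exact (F.orderEmbOfFin rfl).injective (ha.injective hkl)
  · intro k
    simp only [Complex.intCast_re]
    have := ha0 (F.orderEmbOfFin rfl k)
    have h2 : ((-2 : ℤ) : ℝ) ≤ (a (F.orderEmbOfFin rfl k) : ℝ) := by exact_mod_cast this
    push_cast at h2
    linarith
  · intro k
    have := F.orderEmbOfFin_mem rfl k
    exact (Finset.mem_filter.1 this).2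
  · refine ⟨fun x : ℝ => (x : ℂ) * (f x - ∑ i, (x : ℂ) ^ (a i) * (P i).eval ((Real.log x : ℝ) : ℂ)), ?_, ?_⟩
    · have hd0 : 0 < δ := by linarith
      have hu : Ici (1:ℝ) = Icc 1 δ ∪ Ioi δ := by
        rw [Icc_union_Ioi_eq_Ici hδ]
      rw [hu]
      refine IntegrableOn.union ?_ ?_
      · exact (hcont.mono fun x hx => lt_of_lt_of_le one_pos hx.1).integrableOn_Icc
      · have h2 : IntegrableOn (fun x : ℝ => C * x ^ (-2 : ℝ)) (Ioi δ) :=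
          (integrableOn_Ioi_rpow_of_lt (by norm_num) hd0).const_mul C
        refine Integrable.mono' h2 ((hcont.mono fun x hx =>
          lt_trans hd0 hx).aestronglyMeasurable measurableSet_Ioi) ?_
        filter_upwards [ae_restrict_mem measurableSet_Ioi] with x hx
        have hx' : δ < x := hx
        have hx0 : 0 < x := by linarith
        rw [norm_mul, Complex.norm_real, Real.norm_of_nonneg hx0.le]
        have h3 : x ^ (-2 : ℝ) = x * x ^ (-3 : ℝ) := by
          nth_rewrite 2 [← Real.rpow_one x]
          rw [← Real.rpow_add hx0]; norm_num
        rw [h3]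
        nlinarith [hb x hx'.le]
    · intro x hx
      have hxc : (x : ℂ) ≠ 0 := by exact_mod_cast hx.ne'
      have := filter_sum_aux P F hF (fun i R => (x : ℂ) ^ ((a i : ℤ) : ℂ) * R.eval ((Real.log x : ℝ) : ℂ)) (by simp)
      rw [this]
      simp only [Complex.cpow_intCast, Real.rpow_neg_one, Complex.ofReal_inv]
      rw [inv_mul_cancel_left₀ hxc]
      ring
  · exact coeffPolyAt_filter a P F hF ha.injective i0 h0

lemma isLimZero_const (f : ℝ → ℂ) (hf : ContinuousOn f (Ioi 0)) (K : ℂ) (δ : ℝ) (hδ : 0 < δ)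
    (h : ∀ x : ℝ, 0 < x → x ≤ δ → f x = K) : IsLimZero f K := by
  have := isLimZero_of_bound (m := 1) (fun _ => 0) (fun _ => Polynomial.C K)
    (Subsingleton.strictMono _) (by simp) 0 rfl f hf δ 0 hδ (by
      intro x h1 h2
      simp [h x h1 h2])
  simpa using this

lemma isLimInfty_const (f : ℝ → ℂ) (hf : ContinuousOn f (Ioi 0)) (K : ℂ) (δ : ℝ) (hδ : 1 ≤ δ)
    (h : ∀ x : ℝ, δ ≤ x → f x = K) : IsLimInfty f K := by
  have := isLimInfty_of_bound (m := 1) (fun _ => 0) (fun _ => Polynomial.C K)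
    (Subsingleton.strictAnti _) (by simp) 0 rfl f hf δ 0 hδ (by
      intro x h1
      simp [h x h1])
  simpa using this


lemma taylor_bound (g : ℝ → ℂ) (hg : ContDiff ℝ (⊤ : ℕ∞) g) (M : ℕ) (b C : ℝ) (hb : 0 < b)
    (hC : ∀ y ∈ Icc 0 b, ‖iteratedDeriv (M + 1) g y‖ ≤ C) (x : ℝ) (hx : x ∈ Icc 0 b) :
    ‖g x - ∑ k ∈ Finset.range (M + 1), (iteratedDeriv k g 0 / (k.factorial : ℂ)) * (x : ℂ) ^ k‖
      ≤ C * x ^ (M + 1) := by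
  have hun := uniqueDiffOn_Icc hb
  have heq : ∀ k : ℕ, ∀ y ∈ Icc 0 b, iteratedDerivWithin k g (Icc 0 b) y = iteratedDeriv k g y := by
    intro k y hy
    refine iteratedDerivWithin_eq_iteratedDeriv hun ?_ hy
    exact (hg.of_le (by exact_mod_cast le_top)).contDiffAt
  have h0 : (0:ℝ) ∈ Icc 0 b := ⟨le_rfl, hb.le⟩
  have := taylor_mean_remainder_bound (f := g) (a := 0) (b := b) (C := C) (x := x) (n := M) hb.le
    ((hg.of_le (by exact_mod_cast le_top)).contDiffOn) hx (fun y hy => by rw [heq _ y hy]; exact hC y hy)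
  rw [taylor_within_apply] at this
  have e : ∑ k ∈ Finset.range (M + 1), ((k.factorial : ℝ)⁻¹ * (x - 0) ^ k) • iteratedDerivWithin k g (Icc 0 b) 0
      = ∑ k ∈ Finset.range (M + 1), (iteratedDeriv k g 0 / (k.factorial : ℂ)) * (x : ℂ) ^ k := by
    refine Finset.sum_congr rfl fun k _ => ?_
    rw [heq k 0 h0, Complex.real_smul]
    push_cast
    rw [sub_zero]
    ring
  rw [e] at this
  refine this.trans ?_
  rw [sub_zero]
  have hC0 : 0 ≤ C := (norm_nonneg _).trans (hC 0 h0)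
  have hx0 : 0 ≤ x := hx.1
  exact div_le_self (by positivity) (by exact_mod_cast Nat.one_le_iff_ne_zero.2 (Nat.factorial_ne_zero M))

lemma integral_zpow_one (n : ℤ) (x : ℝ) (hx : 0 < x) :
    ∫ s in (1:ℝ)..x, (s : ℂ) ^ (n - 1) = (x : ℂ) ^ n / n - 1 / n + if n = 0 then (Real.log x : ℂ) else 0 := by
  have h0 : (0:ℝ) ∉ uIcc 1 x := by
    intro h
    rw [mem_uIcc] at h
    rcases h with h | h <;> linarith [h.1, h.2]
  have e : ∫ s in (1:ℝ)..x, (s : ℂ) ^ (n - 1) = ((∫ s in (1:ℝ)..x, s ^ (n - 1) : ℝ) : ℂ) := by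
    rw [← intervalIntegral.integral_ofReal]
    push_cast
    rfl
  rw [e]
  by_cases hn : n = 0
  · subst hn
    have : ∫ s in (1:ℝ)..x, s ^ ((0:ℤ) - 1) = Real.log x := by
      have := integral_inv h0
      simpa using this
    rw [this]
    simp
  · rw [integral_zpow (Or.inr ⟨by omega, h0⟩)]
    simp [hn]
    ring

lemma kernel_continuousOn (g : ℝ → ℂ) (hg : Continuous g) (n : ℤ) :
    ContinuousOn (fun s : ℝ => (s : ℂ) ^ n * g s) (Ioi 0) := by
  have hid : ContinuousOn (fun x : ℝ => (x : ℂ)) (Ioi 0) := Complex.continuous_ofReal.continuousOn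
  refine (hid.zpow₀ _ fun x hx => Or.inl ?_).mul hg.continuousOn
  exact_mod_cast (ne_of_gt hx)

lemma uIcc_sub_pos {a b : ℝ} (ha : 0 < a) (hb : 0 < b) : uIcc a b ⊆ Ioi 0 := by
  intro s hs
  exact lt_of_lt_of_le (lt_min ha hb) hs.1

lemma kernel_intervalIntegrable (g : ℝ → ℂ) (hg : Continuous g) (n : ℤ) {a b : ℝ} (ha : 0 < a)
    (hb : 0 < b) : IntervalIntegrable (fun s : ℝ => (s : ℂ) ^ n * g s) volume a b :=
  ((kernel_continuousOn g hg n).mono (uIcc_sub_pos ha hb)).intervalIntegrable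

lemma primitive_continuousOn (f : ℝ → ℂ) (hf : ContinuousOn f (Ioi 0)) :
    ContinuousOn (primitive f) (Ioi 0) := by
  intro x hx
  have hx0 : (0:ℝ) < x := hx
  have h1 : IntervalIntegrable f volume 1 x :=
    (hf.mono (uIcc_sub_pos one_pos hx0)).intervalIntegrable
  have := intervalIntegral.integral_hasDerivAt_right h1
    (hf.stronglyMeasurableAtFilter isOpen_Ioi x hx) (hf.continuousAt (Ioi_mem_nhds hx0))
  exact this.continuousAt.continuousWithinAt

/-- expansion terms -/
def expTerm (g : ℝ → ℂ) (j M : ℕ) (x : ℝ) : ℂ :=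
  ∑ k ∈ Finset.range M, (iteratedDeriv k g 0 / (k.factorial : ℂ)) *
      ((x : ℂ) ^ ((k : ℤ) - j) / (((k : ℤ) - j : ℤ) : ℂ)) +
    (iteratedDeriv j g 0 / (j.factorial : ℂ)) * (Real.log x : ℂ)

lemma prim_expansion (g : ℝ → ℂ) (hg : ContDiff ℝ (⊤ : ℕ∞) g) (j m : ℕ) :
    ∃ (L : ℂ) (C : ℝ), ∀ x : ℝ, 0 < x → x ≤ 1 →
      ‖primitive (fun s => (s : ℂ) ^ (-1 - (j : ℤ)) * g s) x - (L + expTerm g j (j + m + 1) x)‖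
        ≤ C * x ^ (m + 1) := by
  obtain ⟨C, hC⟩ := isCompact_Icc.exists_bound_of_continuousOn
    (hg.continuous_iteratedDeriv (j + m + 1) (by exact_mod_cast le_top)).continuousOn (s := Icc (0:ℝ) 1)
  set M := j + m + 1 with hM
  let e : ℕ → ℂ := fun k => iteratedDeriv k g 0 / (k.factorial : ℂ)
  let r : ℝ → ℂ := fun s => g s - ∑ k ∈ Finset.range M, e k * (s : ℂ) ^ k
  have hr : Continuous r := by
    have := hg.continuous
    fun_prop
  have hrb : ∀ s ∈ Icc (0:ℝ) 1, ‖r s‖ ≤ C * s ^ M := fun s hs =>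
    taylor_bound g hg (j + m) 1 C one_pos hC s hs
  let ρ : ℝ → ℂ := fun s => (s : ℂ) ^ (-1 - (j : ℤ)) * r s
  have hC0 : 0 ≤ C := (norm_nonneg _).trans (hC 0 (by simp))
  have hρb : ∀ s : ℝ, 0 < s → s ≤ 1 → ‖ρ s‖ ≤ C * s ^ m := by
    intro s h0 h1
    have h2 := hrb s ⟨h0.le, h1⟩
    simp only [ρ, norm_mul, norm_zpow, Complex.norm_real, Real.norm_of_nonneg h0.le]
    have h3 : s ^ m = s ^ (-1 - (j : ℤ)) * s ^ M := by
      rw [← zpow_natCast, ← zpow_natCast, ← zpow_add₀ h0.ne']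
      congr 1
      rw [hM]; push_cast; ring
    rw [h3]
    have : 0 ≤ s ^ (-1 - (j : ℤ)) := by positivity
    nlinarith [mul_le_mul_of_nonneg_left h2 this]
  have hρ1 : IntervalIntegrable ρ volume 0 1 := by
    rw [intervalIntegrable_iff_integrableOn_Ioc_of_le zero_le_one]
    refine Integrable.mono' (g := fun _ => C) (integrableOn_const (by simp))
      (((kernel_continuousOn r hr _).mono fun x hx => hx.1).aestronglyMeasurable measurableSet_Ioc) ?_
    filter_upwards [ae_restrict_mem measurableSet_Ioc] with s hs
    refine (hρb s hs.1 hs.2).trans (mul_le_of_le_one_right hC0 (pow_le_one₀ hs.1.le hs.2))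
  refine ⟨-(∫ s in (0:ℝ)..1, ρ s) - ∑ k ∈ Finset.range M, e k * (1 / (((k : ℤ) - j : ℤ) : ℂ)), C, ?_⟩
  intro x hx0 hx1
  have hρx : IntervalIntegrable ρ volume 0 x := hρ1.mono_set (by
    rw [uIcc_of_le hx0.le, uIcc_of_le zero_le_one]; exact Icc_subset_Icc_right hx1)
  have hρ1x : IntervalIntegrable ρ volume 1 x := kernel_intervalIntegrable r hr _ one_pos hx0
  have hsplit : primitive (fun s => (s : ℂ) ^ (-1 - (j : ℤ)) * g s) x
      = (∫ s in (1:ℝ)..x, ρ s) + ∑ k ∈ Finset.range M, e k * ∫ s in (1:ℝ)..x, (s : ℂ) ^ (((k : ℤ) - j) - 1) := by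
    have hz : ∀ n : ℤ, IntervalIntegrable (fun s : ℝ => (s : ℂ) ^ n) volume 1 x := by
      intro n
      simpa using kernel_intervalIntegrable (fun _ => (1:ℂ)) continuous_const n one_pos hx0
    simp_rw [← intervalIntegral.integral_const_mul]
    rw [← intervalIntegral.integral_finsetSum (fun k _ => (hz _).const_mul _),
      ← intervalIntegral.integral_add hρ1x]
    · refine intervalIntegral.integral_congr fun s hs => ?_
      have hs0 : (s : ℂ) ≠ 0 := by
        exact_mod_cast (ne_of_gt (uIcc_sub_pos one_pos hx0 hs))
      simp only [ρ, r]
      have : ∑ k ∈ Finset.range M, e k * (s : ℂ) ^ (((k : ℤ) - j) - 1)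
          = (s : ℂ) ^ (-1 - (j : ℤ)) * ∑ k ∈ Finset.range M, e k * (s : ℂ) ^ k := by
        rw [Finset.mul_sum]
        refine Finset.sum_congr rfl fun k _ => ?_
        have : (k : ℤ) - j - 1 = (-1 - (j : ℤ)) + k := by ring
        rw [this, zpow_add₀ hs0, zpow_natCast]
        ring
      rw [this]
      ring
    · refine ContinuousOn.intervalIntegrable (continuousOn_finsetSum _ fun k _ => ?_)
      have := kernel_continuousOn (fun _ => e k) continuous_const ((k : ℤ) - j - 1)
      refine (this.mono (uIcc_sub_pos one_pos hx0)).congr fun s _ => ?_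
      simp only [mul_comm]
  have hadd : (∫ s in (1:ℝ)..x, ρ s) = -(∫ s in (0:ℝ)..1, ρ s) + ∫ s in (0:ℝ)..x, ρ s := by
    rw [← intervalIntegral.integral_add_adjacent_intervals hρ1 hρ1x]
    ring
  have hsum : ∑ k ∈ Finset.range M, e k * ∫ s in (1:ℝ)..x, (s : ℂ) ^ (((k : ℤ) - j) - 1)
      = expTerm g j M x - ∑ k ∈ Finset.range M, e k * (1 / (((k : ℤ) - j : ℤ) : ℂ)) := by
    simp_rw [integral_zpow_one _ x hx0, mul_add, mul_sub]
    rw [Finset.sum_add_distrib, Finset.sum_sub_distrib]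
    have : ∑ k ∈ Finset.range M, e k * (if (k : ℤ) - j = 0 then (Real.log x : ℂ) else 0)
        = e j * (Real.log x : ℂ) := by
      rw [Finset.sum_eq_single j]
      · simp
      · intro b _ hb
        rw [if_neg (by omega), mul_zero]
      · intro h; exact absurd (Finset.mem_range.2 (by omega)) h
    rw [this]
    simp only [expTerm, e]
    ring
  have hfin : primitive (fun s => (s : ℂ) ^ (-1 - (j : ℤ)) * g s) x -
      (-(∫ s in (0:ℝ)..1, ρ s) - ∑ k ∈ Finset.range M, e k * (1 / (((k : ℤ) - j : ℤ) : ℂ))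
        + expTerm g j M x) = ∫ s in (0:ℝ)..x, ρ s := by
    rw [hsplit, hadd, hsum]; ring
  rw [hfin]
  have := intervalIntegral.norm_integral_le_of_norm_le_const (f := ρ) (a := 0) (b := x) (C := C * x ^ m) (by
    intro s hs
    rw [uIoc_of_le hx0.le] at hs
    refine (hρb s hs.1 (hs.2.trans hx1)).trans ?_
    exact mul_le_mul_of_nonneg_left (pow_le_pow_left₀ hs.1.le hs.2 _) hC0)
  rw [sub_zero, abs_of_pos hx0] at this
  rw [pow_succ, ← mul_assoc]
  exact this


lemma primitive_inv (g : ℝ → ℂ) (hg : Continuous g) (j : ℕ) (x : ℝ) (hx : 0 < x) :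
    primitive (fun ζ => (ζ : ℂ) ^ ((j : ℤ) - 1) * g (1 / ζ)) x
      = -primitive (fun s => (s : ℂ) ^ (-1 - (j : ℤ)) * g s) x⁻¹ := by
  have hsub := uIcc_sub_pos one_pos hx
  have := intervalIntegral.integral_deriv_smul_comp' (a := 1) (b := x) (f := fun y : ℝ => y⁻¹)
    (f' := fun y => -(y ^ 2)⁻¹) (g := fun s : ℝ => (s : ℂ) ^ (-1 - (j : ℤ)) * g s)
    (fun y hy => hasDerivAt_inv (ne_of_gt (hsub hy)))
    (ContinuousOn.neg (ContinuousOn.inv₀ (by fun_prop) fun y hy => by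
      have : 0 < y := hsub hy
      positivity))
    ((kernel_continuousOn g hg _).mono (by
      rintro _ ⟨y, hy, rfl⟩
      have : 0 < y := hsub hy
      exact inv_pos.2 this))
  rw [inv_one] at this
  rw [primitive, primitive, ← this, ← intervalIntegral.integral_neg]
  refine intervalIntegral.integral_congr fun y hy => ?_
  have hy0 : 0 < y := hsub hy
  have hyc : (y : ℂ) ≠ 0 := by exact_mod_cast hy0.ne'
  simp only [Function.comp, Complex.real_smul, one_div]
  push_cast
  rw [inv_zpow']
  have : (j : ℤ) - 1 = -(-1 - (j : ℤ)) + (-2) := by ring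
  rw [this, zpow_add₀ hyc]
  have h2 : (y : ℂ) ^ (-2 : ℤ) = ((y : ℂ) ^ 2)⁻¹ := by
    rw [zpow_neg]; norm_cast
  rw [h2]
  ring

lemma expTerm_succ_bound (g : ℝ → ℂ) (j m : ℕ) : ∃ C : ℝ, ∀ x : ℝ, 0 < x → x ≤ 1 →
    ‖expTerm g j (j + m + 1) x - expTerm g j (j + 1) x‖ ≤ C * x := by
  induction m with
  | zero => exact ⟨0, by simp⟩
  | succ m ih =>
    obtain ⟨C, hC⟩ := ih
    set c : ℂ := (iteratedDeriv (j + m + 1) g 0 / ((j + m + 1).factorial : ℂ)) / ((((j + m + 1 : ℕ) : ℤ) - j : ℤ) : ℂ) with hc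
    refine ⟨C + ‖c‖, fun x hx0 hx1 => ?_⟩
    have h1 : expTerm g j (j + (m + 1) + 1) x = expTerm g j (j + m + 1) x + c * (x : ℂ) ^ (m + 1) := by
      rw [expTerm, expTerm, ← add_assoc j m 1, Finset.sum_range_succ _ (j + m + 1), hc]
      have : (((j + m + 1 : ℕ) : ℤ) - j : ℤ) = ((m + 1 : ℕ) : ℤ) := by push_cast; ring
      rw [this, zpow_natCast]
      ring
    rw [h1, add_sub_right_comm, add_mul]
    refine (norm_add_le _ _).trans (add_le_add (hC x hx0 hx1) ?_)
    rw [norm_mul, norm_pow, Complex.norm_real, Real.norm_of_nonneg hx0.le]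
    refine mul_le_mul_of_nonneg_left ?_ (norm_nonneg _)
    exact pow_le_of_le_one hx0.le hx1 (by simp)

lemma one_dim (g : ℝ → ℂ) (hg : ContDiff ℝ (⊤ : ℕ∞) g) (R : ℝ) (hR : 1 ≤ R)
    (hgR : ∀ x, R ≤ x → g x = 0) (j : ℕ) :
    ∃ B L : ℂ,
      regInt (fun s => (s : ℂ) ^ (-1 - (j : ℤ)) * g s) = B ∧
      regInt (fun ζ => (ζ : ℂ) ^ ((j : ℤ) - 1) * g (1 / ζ)) = B ∧
      B = primitive (fun s => (s : ℂ) ^ (-1 - (j : ℤ)) * g s) R - L ∧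
      ∀ m : ℕ, ∃ C : ℝ, ∀ x : ℝ, 0 < x → x ≤ 1 →
      ‖primitive (fun s => (s : ℂ) ^ (-1 - (j : ℤ)) * g s) x - (L + expTerm g j (j + m + 1) x)‖
        ≤ C * x ^ (m + 1) := by
  set G := primitive (fun s => (s : ℂ) ^ (-1 - (j : ℤ)) * g s) with hG
  set H := primitive (fun ζ => (ζ : ℂ) ^ ((j : ℤ) - 1) * g (1 / ζ)) with hH
  have hR0 : 0 < R := by linarith
  let e : ℕ → ℂ := fun k => iteratedDeriv k g 0 / (k.factorial : ℂ)
  have hGc : ContinuousOn G (Ioi 0) := primitive_continuousOn _ (kernel_continuousOn g hg.continuous _)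
  have hHG : ∀ x : ℝ, 0 < x → H x = - G x⁻¹ := fun x hx => primitive_inv g hg.continuous j x hx
  have hHc : ContinuousOn H (Ioi 0) := by
    have : ContinuousOn (fun x : ℝ => - G x⁻¹) (Ioi 0) := by
      refine (hGc.comp (continuousOn_inv₀.mono fun x hx => ?_) fun x hx => ?_).neg
      · exact ne_of_gt hx
      · exact inv_pos.2 (show 0 < x from hx)
    exact this.congr fun x hx => hHG x hx
  have hGR : ∀ x, R ≤ x → G x = G R := by
    intro x hx
    have hx0 : 0 < x := by linarith
    have h1 := intervalIntegral.integral_add_adjacent_intervals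
      (kernel_intervalIntegrable g hg.continuous (-1 - (j : ℤ)) one_pos hR0)
      (kernel_intervalIntegrable g hg.continuous (-1 - (j : ℤ)) hR0 hx0)
    have h2 : ∫ s in R..x, (s : ℂ) ^ (-1 - (j : ℤ)) * g s = 0 := by
      rw [intervalIntegral.integral_congr (g := fun _ => 0)]
      · simp
      · intro s hs
        rw [uIcc_of_le hx] at hs
        simp [hgR s hs.1]
    rw [h2, add_zero] at h1
    exact h1.symm
  have hlim : ∀ m : ℕ, ∃ L : ℂ, IsLimZero G L ∧ ∃ C : ℝ, ∀ x : ℝ, 0 < x → x ≤ 1 →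
      ‖G x - (L + expTerm g j (j + m + 1) x)‖ ≤ C * x ^ (m + 1) := by
    intro m
    obtain ⟨L, C, hC⟩ := prim_expansion g hg j m
    refine ⟨L, ?_, C, hC⟩
    obtain ⟨C', hC'⟩ := expTerm_succ_bound g j m
    have := isLimZero_of_bound (m := j + 1) (fun i => ((i : ℕ) : ℤ) - j)
      (fun i => Polynomial.C (e i / ((((i : ℕ) : ℤ) - j : ℤ) : ℂ)) +
        if (i : ℕ) = j then Polynomial.C L + Polynomial.C (e j) * X else 0)
      (fun a b hab => by
        have : (a : ℕ) < b := hab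
        simp only; omega)
      (fun i => by have := i.2; omega) ⟨j, by omega⟩ (by simp) G hGc 1 (|C| + C') one_pos ?_
    · simpa using this
    · intro x hx0 hx
      have h1 := hC x hx0 hx
      have h2 := hC' x hx0 hx
      have h3 : ∀ i : Fin (j + 1), (x : ℂ) ^ (((i : ℕ) : ℤ) - j) *
          (Polynomial.C (e i / ((((i : ℕ) : ℤ) - j : ℤ) : ℂ)) +
            if (i : ℕ) = j then Polynomial.C L + Polynomial.C (e j) * X else 0).eval ((Real.log x : ℝ) : ℂ)
          = ((iteratedDeriv i g 0 / ((i : ℕ).factorial : ℂ)) *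
        ((x : ℂ) ^ (((i : ℕ) : ℤ) - j) / ((((i : ℕ) : ℤ) - j : ℤ) : ℂ)))
            + if i = ⟨j, by omega⟩ then L + e j * (Real.log x : ℂ) else 0 := by
        intro i
        by_cases hi : (i : ℕ) = j
        · have hi' : i = ⟨j, by omega⟩ := Fin.ext hi
          rw [if_pos hi, if_pos hi', hi]
          simp
        · have hi' : i ≠ ⟨j, by omega⟩ := fun h => hi (by rw [h])
          simp [hi, hi', e]
          ring
      have h4 : ∑ i : Fin (j + 1), (x : ℂ) ^ (((i : ℕ) : ℤ) - j) *
          (Polynomial.C (e i / ((((i : ℕ) : ℤ) - j : ℤ) : ℂ)) +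
            if (i : ℕ) = j then Polynomial.C L + Polynomial.C (e j) * X else 0).eval ((Real.log x : ℝ) : ℂ)
          = L + expTerm g j (j + 1) x := by
        rw [Finset.sum_congr rfl (fun i _ => h3 i), Finset.sum_add_distrib, expTerm,
          ← Fin.sum_univ_eq_sum_range (fun k => (iteratedDeriv k g 0 / (k.factorial : ℂ)) *
        ((x : ℂ) ^ ((k : ℤ) - j) / (((k : ℤ) - j : ℤ) : ℂ)))]
        simp only [Finset.sum_ite_eq', Finset.mem_univ, if_true]
        simp only [e]
        ring
      rw [h4]
      have h5 : G x - (L + expTerm g j (j + 1) x) = (G x - (L + expTerm g j (j + m + 1) x)) +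
          (expTerm g j (j + m + 1) x - expTerm g j (j + 1) x) := by ring
      rw [h5, add_mul]
      refine (norm_add_le _ _).trans (add_le_add (h1.trans ?_) h2)
      refine mul_le_mul (le_abs_self _) (pow_le_of_le_one hx0.le hx (by simp)) (by positivity) (abs_nonneg _)
  obtain ⟨L, hL, -⟩ := hlim 0
  have hall : ∀ m : ℕ, ∃ C : ℝ, ∀ x : ℝ, 0 < x → x ≤ 1 →
      ‖G x - (L + expTerm g j (j + m + 1) x)‖ ≤ C * x ^ (m + 1) := by
    intro m
    obtain ⟨L', hL', h⟩ := hlim m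
    rw [hL.unique hL']
    exact h
  have hGinf : IsLimInfty G (G R) := isLimInfty_const G hGc _ R hR hGR
  have hHzero : IsLimZero H (- G R) := isLimZero_const H hHc _ R⁻¹ (inv_pos.2 hR0) (by
    intro x hx hxR
    rw [hHG x hx, hGR _ ((le_inv_comm₀ hR0 hx).2 hxR)])
  have hHinf : IsLimInfty H (-L) := by
    obtain ⟨C, hC⟩ := hall 2
    have := isLimInfty_of_bound (m := j + 2 + 1) (fun i => (j : ℤ) - (i : ℕ))
      (fun i => Polynomial.C (- (e i / ((((i : ℕ) : ℤ) - j : ℤ) : ℂ))) +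
        if (i : ℕ) = j then Polynomial.C (-L) + Polynomial.C (e j) * X else 0)
      (fun a b hab => by
        have : (a : ℕ) < b := hab
        simp only; omega)
      (fun i => by have := i.2; omega) ⟨j, by omega⟩ (by simp) H hHc 1 C le_rfl ?_
    · simpa using this
    · intro x hx
      have hx0 : 0 < x := by linarith
      have h1 := hC x⁻¹ (inv_pos.2 hx0) (inv_le_one_of_one_le₀ hx)
      have h2 : (x⁻¹ ^ (2 + 1) : ℝ) = x ^ (-3 : ℝ) := by
        rw [Real.rpow_neg hx0.le, inv_pow]; norm_cast
      rw [h2] at h1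
      rw [← norm_neg] at h1
      refine le_of_eq_of_le (congrArg norm ?_) h1
      rw [hHG x hx0, expTerm, Real.log_inv]
      rw [← Fin.sum_univ_eq_sum_range (fun k => (iteratedDeriv k g 0 / (k.factorial : ℂ)) *
        (((x⁻¹ : ℝ) : ℂ) ^ ((k : ℤ) - j) / (((k : ℤ) - j : ℤ) : ℂ)))]
      have h3 : ∀ i : Fin (j + 2 + 1), (x : ℂ) ^ ((j : ℤ) - (i : ℕ)) *
          (Polynomial.C (- (e i / ((((i : ℕ) : ℤ) - j : ℤ) : ℂ))) +
            if (i : ℕ) = j then Polynomial.C (-L) + Polynomial.C (e j) * X else 0).eval ((Real.log x : ℝ) : ℂ)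
          = - ((iteratedDeriv i g 0 / ((i : ℕ).factorial : ℂ)) *
        (((x⁻¹ : ℝ) : ℂ) ^ (((i : ℕ) : ℤ) - j) / ((((i : ℕ) : ℤ) - j : ℤ) : ℂ)))
            + if i = ⟨j, by omega⟩ then -L + e j * (Real.log x : ℂ) else 0 := by
        intro i
        have hz : ((x⁻¹ : ℝ) : ℂ) ^ (((i : ℕ) : ℤ) - j) = (x : ℂ) ^ ((j : ℤ) - (i : ℕ)) := by
          rw [Complex.ofReal_inv, inv_zpow', neg_sub]
        rw [hz]
        by_cases hi : (i : ℕ) = j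
        · have hi' : i = ⟨j, by omega⟩ := Fin.ext hi
          rw [if_pos hi, if_pos hi', hi]
          simp
        · have hi' : i ≠ ⟨j, by omega⟩ := fun h => hi (by rw [h])
          simp [hi, hi', e]
          ring
      rw [Finset.sum_congr rfl (fun i _ => h3 i), Finset.sum_add_distrib, Finset.sum_neg_distrib]
      simp only [Finset.sum_ite_eq', Finset.mem_univ, if_true]
      push_cast
      simp only [e]
      ring
  refine ⟨G R - L, L, ?_, ?_, rfl, hall⟩
  · rw [regInt, ← hG, hGinf.limInfty_eq, hL.limZero_eq]
  · rw [regInt, ← hH, hHinf.limInfty_eq, hHzero.limZero_eq]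
    ring


/-- smooth functions on the plane -/
abbrev Sm := {w : ℝ × ℝ → ℂ // ContDiff ℝ (⊤ : ℕ∞) w}

lemma hasDerivAt_fst (w : ℝ × ℝ → ℂ) (hw : ContDiff ℝ (⊤ : ℕ∞) w) (x y : ℝ) :
    HasDerivAt (fun x => w (x, y)) (fderiv ℝ w (x, y) (1, 0)) x := by
  have h1 : HasFDerivAt w (fderiv ℝ w (x, y)) (x, y) :=
    (hw.differentiable (by simp)).differentiableAt.hasFDerivAt
  exact h1.comp_hasDerivAt x ((hasDerivAt_id x).prodMk (hasDerivAt_const x y))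

lemma hasDerivAt_snd (w : ℝ × ℝ → ℂ) (hw : ContDiff ℝ (⊤ : ℕ∞) w) (x y : ℝ) :
    HasDerivAt (fun y => w (x, y)) (fderiv ℝ w (x, y) (0, 1)) y := by
  have h1 : HasFDerivAt w (fderiv ℝ w (x, y)) (x, y) :=
    (hw.differentiable (by simp)).differentiableAt.hasFDerivAt
  exact h1.comp_hasDerivAt y ((hasDerivAt_const y x).prodMk (hasDerivAt_id y))

/-- directional derivative -/
def Dv (v : ℝ × ℝ) (w : Sm) : Sm :=
  ⟨fun p => fderiv ℝ w.1 p v, (w.2.fderiv_right (m := (⊤ : ℕ∞)) (by simp)).clm_apply contDiff_const⟩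

lemma Dv_comm (a b : ℝ × ℝ) : Function.Commute (Dv a) (Dv b) := by
  intro w
  apply Subtype.ext
  funext p
  have hd : DifferentiableAt ℝ (fderiv ℝ w.1) p :=
    ((w.2.fderiv_right (m := (⊤ : ℕ∞)) (by simp)).differentiable (by simp)).differentiableAt
  have hs : IsSymmSndFDerivAt ℝ w.1 p := by
    refine (w.2.contDiffAt).isSymmSndFDerivAt ?_
    rw [minSmoothness_of_isRCLikeNormedField]
    exact WithTop.coe_le_coe.2 le_top
  have key : ∀ a b : ℝ × ℝ, (Dv a (Dv b w)).1 p = fderiv ℝ (fderiv ℝ w.1) p a b := by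
    intro a b
    change fderiv ℝ (fun q => fderiv ℝ w.1 q b) p a = _
    rw [fderiv_clm_apply hd (differentiableAt_const b)]
    simp
  rw [key, key, hs.eq]

lemma iter_snd (j : ℕ) : ∀ (w : Sm) (x y : ℝ),
    iteratedDeriv j (fun y => w.1 (x, y)) y = ((Dv (0, 1))^[j] w).1 (x, y) := by
  induction j with
  | zero => intro w x y; simp
  | succ j ih =>
    intro w x y
    rw [iteratedDeriv_succ', Function.iterate_succ_apply, ← ih]
    congr 1
    funext z
    exact (hasDerivAt_snd w.1 w.2 x z).deriv

lemma iter_fst (j : ℕ) : ∀ (w : Sm) (x y : ℝ),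
    iteratedDeriv j (fun x => w.1 (x, y)) x = ((Dv (1, 0))^[j] w).1 (x, y) := by
  induction j with
  | zero => intro w x y; simp
  | succ j ih =>
    intro w x y
    rw [iteratedDeriv_succ', Function.iterate_succ_apply, ← ih]
    congr 1
    funext z
    exact (hasDerivAt_fst w.1 w.2 z y).deriv

lemma mixed (u : ℝ → ℝ → ℂ) (hu : ContDiff ℝ (⊤ : ℕ∞) (Function.uncurry u)) (j k : ℕ) :
    iteratedDeriv k (fun y => iteratedDeriv j (fun x => u x y) 0) 0
      = iteratedDeriv j (fun x => iteratedDeriv k (fun y => u x y) 0) 0 := by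
  let w : Sm := ⟨Function.uncurry u, hu⟩
  have h1 : (fun y => iteratedDeriv j (fun x => u x y) 0) = fun y => ((Dv (1, 0))^[j] w).1 (0, y) :=
    funext fun y => iter_fst j w 0 y
  have h2 : (fun x => iteratedDeriv k (fun y => u x y) 0) = fun x => ((Dv (0, 1))^[k] w).1 (x, 0) :=
    funext fun x => iter_snd k w x 0
  rw [h1, h2, iter_fst, iter_snd]
  rw [((Dv_comm (0, 1) (1, 0)).iterate_iterate k j).eq w]

lemma g_smooth (u : ℝ → ℝ → ℂ) (hu : ContDiff ℝ (⊤ : ℕ∞) (Function.uncurry u)) (j : ℕ) :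
    ContDiff ℝ (⊤ : ℕ∞) (fun x => 1 / (j.factorial : ℂ) * iteratedDeriv j (fun y => u x y) 0) := by
  let w : Sm := ⟨Function.uncurry u, hu⟩
  have h2 : (fun x => iteratedDeriv j (fun y => u x y) 0) = fun x => ((Dv (0, 1))^[j] w).1 (x, 0) :=
    funext fun x => iter_snd j w x 0
  have : ContDiff ℝ (⊤ : ℕ∞) (fun x => iteratedDeriv j (fun y => u x y) 0) := by
    rw [h2]
    exact ((Dv (0, 1))^[j] w).2.comp (contDiff_id.prodMk contDiff_const)
  exact contDiff_const.mul this

lemma taylor_unif (u : ℝ → ℝ → ℂ) (hu : ContDiff ℝ (⊤ : ℕ∞) (Function.uncurry u)) (R : ℝ) (M : ℕ) :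
    ∃ C : ℝ, 0 ≤ C ∧ ∀ x ∈ Icc 0 R, ∀ y ∈ Icc (0:ℝ) 1,
      ‖u x y - ∑ k ∈ Finset.range (M + 1),
        (1 / (k.factorial : ℂ) * iteratedDeriv k (fun y => u x y) 0) * (y : ℂ) ^ k‖ ≤ C * y ^ (M + 1) := by
  let w : Sm := ⟨Function.uncurry u, hu⟩
  obtain ⟨C, hC⟩ := (isCompact_Icc.prod isCompact_Icc).exists_bound_of_continuousOn
    ((Dv (0, 1))^[M + 1] w).2.continuous.continuousOn (s := Icc (0:ℝ) R ×ˢ Icc (0:ℝ) 1)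
  refine ⟨|C|, abs_nonneg _, fun x hx y hy => ?_⟩
  have hs : ContDiff ℝ (⊤ : ℕ∞) (fun y => u x y) := hu.comp (contDiff_const.prodMk contDiff_id)
  have := taylor_bound (fun y => u x y) hs M 1 |C| one_pos (by
    intro z hz
    have h := iter_snd (M + 1) w x z
    change iteratedDeriv (M + 1) (fun y => u x y) z = _ at h
    rw [h]
    exact (hC (x, z) ⟨hx, hz⟩).trans (le_abs_self _)) y hy
  convert this using 5
  ring

lemma half (v : ℝ → ℝ → ℂ) (hv : ContDiff ℝ (⊤ : ℕ∞) (Function.uncurry v)) (R : ℝ) (hR : 1 ≤ R)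
    (hvR : ∀ x y, R ≤ x → v x y = 0) (g : ℕ → ℝ → ℂ)
    (hg : g = fun j x => 1 / (j.factorial : ℂ) * iteratedDeriv j (fun y => v x y) 0) (N : ℕ) :
    ∃ B : ℕ → ℂ, (∀ j : ℕ, regInt (fun s => (s : ℂ) ^ (-1 - (j : ℤ)) * g j s) = B j) ∧
      (∀ j : ℕ, regInt (fun ζ => (ζ : ℂ) ^ ((j : ℤ) - 1) * g j (1 / ζ)) = B j) ∧
      ∃ C : ℝ, 0 ≤ C ∧ ∀ t ε : ℝ, 0 < ε → ε ≤ 1 → t = ε ^ 2 →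
        ‖(∫ x in ε..R, v x (t / x) * (1 / (x : ℂ))) -
          ∑ j ∈ Finset.range (2 * N + 1 + 1), (t : ℂ) ^ j * (B j - expTerm (g j) j (2 * N + 1 + 1) ε)‖
        ≤ C * t ^ N := by
  have hgs : ∀ j, ContDiff ℝ (⊤ : ℕ∞) (g j) := fun j => by rw [hg]; exact g_smooth v hv j
  have hgR : ∀ j, ∀ x, R ≤ x → g j x = 0 := by
    intro j x hx
    have : (fun y => v x y) = fun _ => 0 := funext fun y => hvR x y hx
    simp only [hg, this]
    simp
  choose B L h1 h2 h3 h4 using fun j => one_dim (g j) (hgs j) R hR (hgR j) j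
  refine ⟨B, h1, h2, ?_⟩
  choose Cf hCf using h4
  obtain ⟨C0, hC0, hT⟩ := taylor_unif v hv R (2 * N + 1)
  set M := 2 * N + 1 + 1 with hM
  have hR0 : 0 < R := by linarith
  have hgsum : ∀ j, 0 ≤ |Cf j (M - 1 - j)| := fun _ => abs_nonneg _
  refine ⟨C0 * R + ∑ j ∈ Finset.range M, |Cf j (M - 1 - j)|, by positivity, ?_⟩
  rintro t ε hε0 hε1 rfl
  have hεR : ε ≤ R := hε1.trans hR
  have hsub := uIcc_sub_pos hε0 hR0
  have hint : ∀ j : ℕ, IntervalIntegrable (fun s : ℝ => (s : ℂ) ^ (-1 - (j : ℤ)) * g j s) volume ε R :=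
    fun j => kernel_intervalIntegrable (g j) (hgs j).continuous _ hε0 hR0
  have hB : ∀ j : ℕ, B j = (∫ s in ε..R, (s : ℂ) ^ (-1 - (j : ℤ)) * g j s) +
      (primitive (fun s => (s : ℂ) ^ (-1 - (j : ℤ)) * g j s) ε - L j) := by
    intro j
    have := intervalIntegral.integral_add_adjacent_intervals
      (kernel_intervalIntegrable (g j) (hgs j).continuous (-1 - (j : ℤ)) one_pos hε0) (hint j)
    rw [h3 j, primitive, primitive, ← this]
    ring
  have hvi : IntervalIntegrable (fun x : ℝ => v x (ε ^ 2 / x) * (1 / (x : ℂ))) volume ε R := by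
    refine ContinuousOn.intervalIntegrable ?_
    have hne : ∀ x ∈ uIcc ε R, x ≠ 0 := fun x hx => ne_of_gt (hsub hx)
    refine ContinuousOn.mul ?_ ?_
    · refine hv.continuous.comp_continuousOn (f := fun x : ℝ => (x, ε ^ 2 / x)) ?_
      exact continuousOn_id.prodMk (continuousOn_const.div continuousOn_id hne)
    · refine continuousOn_const.div Complex.continuous_ofReal.continuousOn fun x hx => ?_
      exact_mod_cast hne x hx
  have hsplit : (∫ x in ε..R, v x (ε ^ 2 / x) * (1 / (x : ℂ)))
      - ∑ j ∈ Finset.range M, ((ε ^ 2 : ℝ) : ℂ) ^ j * ∫ s in ε..R, (s : ℂ) ^ (-1 - (j : ℤ)) * g j s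
      = ∫ x in ε..R, (v x (ε ^ 2 / x) - ∑ j ∈ Finset.range M, g j x * ((ε ^ 2 / x : ℝ) : ℂ) ^ j) * (1 / (x : ℂ)) := by
    simp_rw [← intervalIntegral.integral_const_mul]
    rw [← intervalIntegral.integral_finsetSum (fun j _ => (hint j).const_mul _),
      ← intervalIntegral.integral_sub hvi]
    · refine intervalIntegral.integral_congr fun x hx => ?_
      have hx0 : (x : ℂ) ≠ 0 := by exact_mod_cast (ne_of_gt (hsub hx))
      simp only [sub_mul, Finset.sum_mul]
      congr 1
      refine Finset.sum_congr rfl fun j _ => ?_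
      rw [Complex.ofReal_div, div_pow, show (-1 - (j:ℤ)) = -(1 + (j : ℤ)) by ring, zpow_neg,
        zpow_add₀ hx0, zpow_one, zpow_natCast]
      field_simp
    · refine ContinuousOn.intervalIntegrable (continuousOn_finsetSum _ fun k _ => ?_)
      exact continuousOn_const.mul ((kernel_continuousOn (g k) (hgs k).continuous _).mono hsub)
  have hb1 : ‖∫ x in ε..R, (v x (ε ^ 2 / x) - ∑ j ∈ Finset.range M, g j x * ((ε ^ 2 / x : ℝ) : ℂ) ^ j) * (1 / (x : ℂ))‖
      ≤ C0 * R * (ε ^ 2) ^ N := by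
    have := intervalIntegral.norm_integral_le_of_norm_le_const
      (f := fun x : ℝ => (v x (ε ^ 2 / x) - ∑ j ∈ Finset.range M, g j x * ((ε ^ 2 / x : ℝ) : ℂ) ^ j) * (1 / (x : ℂ)))
      (a := ε) (b := R) (C := C0 * (ε ^ 2) ^ N) (by
        intro x hx
        rw [uIoc_of_le hεR] at hx
        have hx0 : 0 < x := hε0.trans hx.1
        have hy : ε ^ 2 / x ≤ ε := by
          rw [div_le_iff₀ hx0]; nlinarith [hx.1]
        have hy0 : 0 ≤ ε ^ 2 / x := by positivity
        have h := hT x ⟨hx0.le, hx.2⟩ (ε ^ 2 / x) ⟨hy0, hy.trans hε1⟩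
        rw [norm_mul, norm_div, norm_one, Complex.norm_real, Real.norm_of_nonneg hx0.le]
        have h' : ‖v x (ε ^ 2 / x) - ∑ j ∈ Finset.range M, g j x * ((ε ^ 2 / x : ℝ) : ℂ) ^ j‖ ≤ C0 * ε ^ M := by
          rw [hg]
          exact h.trans (mul_le_mul_of_nonneg_left (pow_le_pow_left₀ hy0 hy _) hC0)
        have h6 : 1 / x ≤ 1 / ε := one_div_le_one_div_of_le hε0 hx.1.le
        calc _ ≤ C0 * ε ^ M * (1 / ε) := mul_le_mul h' h6 (by positivity) (by positivity)
          _ = C0 * ((ε ^ 2) ^ N * ε) := by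
            rw [hM, pow_succ, ← pow_mul, pow_succ]; field_simp
          _ ≤ C0 * (ε ^ 2) ^ N := by
            refine mul_le_mul_of_nonneg_left (mul_le_of_le_one_right (by positivity) hε1) hC0)
    refine this.trans ?_
    rw [abs_of_nonneg (by linarith)]
    have : 0 ≤ C0 * (ε ^ 2) ^ N := by positivity
    nlinarith
  have hb2 : ‖∑ j ∈ Finset.range M, ((ε ^ 2 : ℝ) : ℂ) ^ j *
      (primitive (fun s => (s : ℂ) ^ (-1 - (j : ℤ)) * g j s) ε - (L j + expTerm (g j) j M ε))‖
      ≤ (∑ j ∈ Finset.range M, |Cf j (M - 1 - j)|) * (ε ^ 2) ^ N := by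
    rw [Finset.sum_mul]
    refine norm_sum_le_of_le _ fun j hj => ?_
    have hj' : j < M := Finset.mem_range.1 hj
    have h := hCf j (M - 1 - j) ε hε0 hε1
    rw [show j + (M - 1 - j) + 1 = M by omega] at h
    rw [norm_mul, norm_pow, Complex.norm_real, Real.norm_of_nonneg (by positivity)]
    have hp : (ε ^ 2) ^ j * ε ^ (M - 1 - j + 1) ≤ (ε ^ 2) ^ N := by
      rw [← pow_mul, ← pow_mul, ← pow_add]
      exact pow_le_pow_of_le_one hε0.le hε1 (by omega)
    calc _ ≤ (ε ^ 2) ^ j * (|Cf j (M - 1 - j)| * ε ^ (M - 1 - j + 1)) := by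
          refine mul_le_mul_of_nonneg_left (h.trans ?_) (by positivity)
          exact mul_le_mul_of_nonneg_right (le_abs_self _) (by positivity)
      _ = |Cf j (M - 1 - j)| * ((ε ^ 2) ^ j * ε ^ (M - 1 - j + 1)) := by ring
      _ ≤ _ := mul_le_mul_of_nonneg_left hp (abs_nonneg _)
  have hfin : (∫ x in ε..R, v x (ε ^ 2 / x) * (1 / (x : ℂ))) -
          ∑ j ∈ Finset.range M, ((ε ^ 2 : ℝ) : ℂ) ^ j * (B j - expTerm (g j) j M ε)
      = (∫ x in ε..R, (v x (ε ^ 2 / x) - ∑ j ∈ Finset.range M, g j x * ((ε ^ 2 / x : ℝ) : ℂ) ^ j) * (1 / (x : ℂ)))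
        - ∑ j ∈ Finset.range M, ((ε ^ 2 : ℝ) : ℂ) ^ j *
      (primitive (fun s => (s : ℂ) ^ (-1 - (j : ℤ)) * g j s) ε - (L j + expTerm (g j) j M ε)) := by
    rw [← hsplit, sub_sub, ← Finset.sum_add_distrib]
    congr 1
    refine Finset.sum_congr rfl fun j _ => ?_
    rw [hB j]
    ring
  rw [hfin, add_mul]
  exact (norm_sub_le _ _).trans (add_le_add hb1 hb2)

lemma cross_cancel (e : ℕ → ℕ → ℂ) (M : ℕ) (ε : ℝ) (hε : 0 < ε) :
    ∑ j ∈ Finset.range M, ((ε ^ 2 : ℝ) : ℂ) ^ j *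
      (∑ k ∈ Finset.range M, e j k * ((ε : ℂ) ^ ((k : ℤ) - j) / (((k : ℤ) - j : ℤ) : ℂ)) +
       ∑ k ∈ Finset.range M, e k j * ((ε : ℂ) ^ ((k : ℤ) - j) / (((k : ℤ) - j : ℤ) : ℂ))) = 0 := by
  have hε' : (ε : ℂ) ≠ 0 := by exact_mod_cast hε.ne'
  have hp : ∀ j k : ℕ, ((ε ^ 2 : ℝ) : ℂ) ^ j * (ε : ℂ) ^ ((k : ℤ) - j) = (ε : ℂ) ^ (j + k) := by
    intro j k
    rw [Complex.ofReal_pow, ← pow_mul, ← zpow_natCast, ← zpow_add₀ hε', ← zpow_natCast]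
    congr 1
    push_cast
    ring
  have h1 : ∀ (e : ℕ → ℕ → ℂ) (j k : ℕ), ((ε ^ 2 : ℝ) : ℂ) ^ j * (e j k * ((ε : ℂ) ^ ((k : ℤ) - j) / (((k : ℤ) - j : ℤ) : ℂ)))
      = e j k * (ε : ℂ) ^ (j + k) / (((k : ℤ) - j : ℤ) : ℂ) := by
    intro e j k
    rw [← hp j k]; ring
  simp_rw [mul_add, Finset.sum_add_distrib, Finset.mul_sum]
  simp_rw [h1 e, h1 (fun j k => e k j)]
  rw [Finset.sum_comm (s := Finset.range M) (t := Finset.range M)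
    (f := fun j k => e k j * (ε : ℂ) ^ (j + k) / (((k : ℤ) - j : ℤ) : ℂ)), ← Finset.sum_add_distrib]
  refine Finset.sum_eq_zero fun j _ => ?_
  rw [← Finset.sum_add_distrib]
  refine Finset.sum_eq_zero fun k _ => ?_
  rw [add_comm k j, ← neg_sub (k : ℤ) j, Int.cast_neg, div_neg, add_neg_cancel]



lemma support_bound (u : ℝ → ℝ → ℂ) (hsupp : HasCompactSupport (Function.uncurry u)) :
    ∃ R : ℝ, 1 ≤ R ∧ (∀ x y, R ≤ x → u x y = 0) ∧ (∀ x y, R ≤ y → u x y = 0) := by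
  obtain ⟨r, hr⟩ := hsupp.isCompact.isBounded.subset_closedBall (0 : ℝ × ℝ)
  have key : ∀ x y, r < max |x| |y| → u x y = 0 := by
    intro x y h
    by_contra hne
    have h1 : (x, y) ∈ tsupport (Function.uncurry u) := subset_tsupport _ hne
    have h2 := hr h1
    rw [mem_closedBall_zero_iff, Prod.norm_def] at h2
    simp only [Real.norm_eq_abs] at h2
    linarith
  refine ⟨|r| + 1, by linarith [abs_nonneg r], fun x y h => key x y ?_, fun x y h => key x y ?_⟩
  · have := le_abs_self x
    have := le_max_left |x| |y|
    have := le_abs_self r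
    linarith
  · have := le_abs_self y
    have := le_max_right |x| |y|
    have := le_abs_self r
    linarith

lemma split_integral (u : ℝ → ℝ → ℂ) (hu : Continuous (Function.uncurry u)) (R : ℝ) (hR : 1 ≤ R)
    (h1 : ∀ x y, R ≤ x → u x y = 0) (h2 : ∀ x y, R ≤ y → u x y = 0) (t ε : ℝ)
    (hε : 0 < ε) (hε1 : ε ≤ 1) (ht : t = ε ^ 2) :
    (∫ x in Ioi (0:ℝ), u x (t / x) * (1 / (x : ℂ))) =
      (∫ x in ε..R, u x (t / x) * (1 / (x : ℂ))) + ∫ y in ε..R, u (t / y) y * (1 / (y : ℂ)) := by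
  have hR0 : 0 < R := by linarith
  have ht0 : 0 < t := by rw [ht]; positivity
  have htR : 0 < t / R := by positivity
  have htε : t / R ≤ ε := by rw [div_le_iff₀ hR0, ht]; nlinarith
  have hεR : ε ≤ R := hε1.trans hR
  have hcont : ContinuousOn (fun x : ℝ => u x (t / x) * (1 / (x : ℂ))) (Ioi 0) := by
    have hne : ∀ x ∈ Ioi (0:ℝ), x ≠ 0 := fun x hx => ne_of_gt hx
    refine ContinuousOn.mul ?_ ?_
    · refine hu.comp_continuousOn (f := fun x : ℝ => (x, t / x)) ?_
      exact continuousOn_id.prodMk (continuousOn_const.div continuousOn_id hne)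
    · refine continuousOn_const.div Complex.continuous_ofReal.continuousOn fun x hx => ?_
      exact_mod_cast hne x hx
  have hA : (∫ x in Ioi (0:ℝ), u x (t / x) * (1 / (x : ℂ))) = ∫ x in (t / R)..R, u x (t / x) * (1 / (x : ℂ)) := by
    rw [intervalIntegral.integral_of_le (htε.trans hεR)]
    refine setIntegral_eq_of_subset_of_forall_sdiff_eq_zero measurableSet_Ioi
      (fun x hx => htR.trans hx.1) ?_
    rintro x ⟨hx, hx'⟩
    have hx0 : 0 < x := hx
    by_cases hxR : R ≤ x
    · rw [h1 _ _ hxR, zero_mul]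
    · have : x ≤ t / R := by
        by_contra hc
        exact hx' ⟨not_le.1 hc, (not_le.1 hxR).le⟩
      rw [h2 _ _ (by rw [le_div_iff₀ hx0]; rw [le_div_iff₀ hR0] at this; linarith), zero_mul]
  rw [hA, ← intervalIntegral.integral_add_adjacent_intervals (b := ε)
    ((hcont.mono (uIcc_sub_pos htR hε)).intervalIntegrable)
    ((hcont.mono (uIcc_sub_pos hε hR0)).intervalIntegrable), add_comm]
  congr 1
  have hs := intervalIntegral.integral_deriv_smul_comp'' (a := ε) (b := R) (f := fun y : ℝ => t / y)
    (f' := fun y : ℝ => -t / y ^ 2) (g := fun x : ℝ => u x (t / x) * (1 / (x : ℂ)))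
    (continuousOn_const.div continuousOn_id fun x hx => ne_of_gt (uIcc_sub_pos hε hR0 hx))
    (by
      intro x hx
      have hx0 : x ≠ 0 := by
        have : 0 < x := lt_trans (lt_min hε hR0) hx.1
        exact this.ne'
      have h3 : HasDerivAt (fun y : ℝ => t / y) (-t / x ^ 2) x := by
        simpa [div_eq_mul_inv] using (hasDerivAt_inv hx0).const_mul t
      exact h3.hasDerivWithinAt)
    (continuousOn_const.div (continuousOn_id.pow 2) fun x hx =>
      pow_ne_zero 2 (ne_of_gt (uIcc_sub_pos hε hR0 hx)))
    (hcont.mono (by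
      rintro _ ⟨x, hx, rfl⟩
      exact div_pos ht0 (uIcc_sub_pos hε hR0 hx)))
  have e1 : t / ε = ε := by rw [ht]; field_simp
  rw [e1, intervalIntegral.integral_symm (t / R) ε] at hs
  rw [← neg_neg (∫ x in (t / R)..ε, u x (t / x) * (1 / (x : ℂ))), ← hs, ← intervalIntegral.integral_neg]
  refine intervalIntegral.integral_congr fun y hy => ?_
  have hy0 : y ≠ 0 := ne_of_gt (uIcc_sub_pos hε hR0 hy)
  have hyc : (y : ℂ) ≠ 0 := by exact_mod_cast hy0
  have htc : (t : ℂ) ≠ 0 := by exact_mod_cast ht0.ne'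
  have e2 : t / (t / y) = y := by field_simp
  simp only [Function.comp, e2, Complex.real_smul]
  push_cast
  field_simp


/-- **Complete asymptotic expansion of the push-forward under `f(x,y) = xy` of a
smooth compactly supported density.**  For smooth compactly supported `u`, with
`a_j = ⨍_0^∞ (ζ^{j-1}/j!) ∂_1^j u(0, 1/ζ) dζ`,
`b_j = ⨍_0^∞ (x^{-1-j}/j!) ∂_2^j u(x, 0) dx` and
`c_j = (1/(j!)²) ∂_1^j ∂_2^j u(0,0)`, the push-forward
`(f_* u)(t) = ∫_0^∞ u(x, t/x)(1/x) dx` satisfies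
`f_* u(t) ∼ Σ_{j ≥ 0} t^j (a_j + b_j - c_j log t)` as `t → 0⁺`. -/
theorem pushforward_smooth_asymptotics (u : ℝ → ℝ → ℂ)
    (hu : ContDiff ℝ (⊤ : ℕ∞) (Function.uncurry u))
    (hsupp : HasCompactSupport (Function.uncurry u)) :
    ∀ N : ℕ, ∃ C > 0, ∃ t₀ ∈ Ioo (0:ℝ) 1, ∀ t : ℝ, 0 < t → t < t₀ →
      ‖(∫ x in Ioi (0:ℝ), u x (t / x) * (1 / (x : ℂ)))
        - ∑ j ∈ Finset.range N, (t : ℂ) ^ (j : ℕ) *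
          ((regInt fun ζ : ℝ => (ζ : ℂ) ^ ((j : ℤ) - 1) / (j.factorial : ℂ) *
              iteratedDeriv j (fun x => u x (1 / ζ)) 0)
            + (regInt fun x : ℝ => (x : ℂ) ^ (-1 - (j : ℤ)) / (j.factorial : ℂ) *
              iteratedDeriv j (fun y => u x y) 0)
            - (1 / ((j.factorial : ℂ)) ^ 2) *
              iteratedDeriv j (fun x => iteratedDeriv j (fun y => u x y) 0) 0 *
                (Real.log t : ℂ))‖
      ≤ C * t ^ (N : ℕ) * (1 + |Real.log t|) := by
  intro N
  obtain ⟨R, hR, hx, hy⟩ := support_bound u hsupp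
  have hu' : ContDiff ℝ (⊤ : ℕ∞) (Function.uncurry fun a b => u b a) :=
    hu.comp (contDiff_snd.prodMk contDiff_fst)
  obtain ⟨B, hB, -, C1, hC1, hE1⟩ := half u hu R hR hx _ rfl N
  obtain ⟨A, -, hA, C2, hC2, hE2⟩ := half (fun a b => u b a) hu' R hR (fun x y h => hy y x h) _ rfl N
  set M := 2 * N + 1 + 1 with hM
  set d : ℕ → ℕ → ℂ := fun k j => iteratedDeriv k (fun x => iteratedDeriv j (fun y => u x y) 0) 0 with hd
  set e : ℕ → ℕ → ℂ := fun j k => 1 / (j.factorial : ℂ) * d k j / (k.factorial : ℂ) with he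
  have hb : ∀ j : ℕ, (regInt fun x : ℝ => (x : ℂ) ^ (-1 - (j : ℤ)) / (j.factorial : ℂ) *
              iteratedDeriv j (fun y => u x y) 0) = B j := by
    intro j
    rw [← hB j]
    congr 1
    funext x
    ring
  have ha : ∀ j : ℕ, (regInt fun ζ : ℝ => (ζ : ℂ) ^ ((j : ℤ) - 1) / (j.factorial : ℂ) *
              iteratedDeriv j (fun x => u x (1 / ζ)) 0) = A j := by
    intro j
    rw [← hA j]
    congr 1
    funext x
    ring
  have hc : ∀ j : ℕ, (1 / ((j.factorial : ℂ)) ^ 2) *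
              iteratedDeriv j (fun x => iteratedDeriv j (fun y => u x y) 0) 0 = e j j := by
    intro j
    simp only [he, hd]
    ring
  simp only [ha, hb, hc]
  have hg1 : ∀ (j : ℕ) (ε : ℝ), expTerm (fun x => 1 / (j.factorial : ℂ) * iteratedDeriv j (fun y => u x y) 0) j M ε
      = ∑ k ∈ Finset.range M, e j k * ((ε : ℂ) ^ ((k : ℤ) - j) / (((k : ℤ) - j : ℤ) : ℂ))
        + e j j * (Real.log ε : ℂ) := by
    intro j ε
    simp only [expTerm, iteratedDeriv_const_mul_field, he, hd]
  have hg2 : ∀ (j : ℕ) (ε : ℝ), expTerm (fun y => 1 / (j.factorial : ℂ) * iteratedDeriv j (fun x => u x y) 0) j M ε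
      = ∑ k ∈ Finset.range M, e k j * ((ε : ℂ) ^ ((k : ℤ) - j) / (((k : ℤ) - j : ℤ) : ℂ))
        + e j j * (Real.log ε : ℂ) := by
    intro j ε
    have h : ∀ k, 1 / (j.factorial : ℂ) * d j k / (k.factorial : ℂ) = e k j := by
      intro k
      simp only [he]
      ring
    simp only [expTerm, iteratedDeriv_const_mul_field, mixed u hu]
    congr 1
    exact Finset.sum_congr rfl fun k _ => by rw [← h k]
  set S : ℝ := ∑ j ∈ Finset.range M, (‖A j + B j‖ + ‖e j j‖) with hS
  have hS0 : 0 ≤ S := Finset.sum_nonneg fun j _ => by positivity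
  refine ⟨C1 + C2 + S + 1, by positivity, 1 / 2, by norm_num, ?_⟩
  intro t ht0 ht1
  have ht1' : t ≤ 1 := by linarith
  have hε : 0 < Real.sqrt t := Real.sqrt_pos.2 ht0
  have hε1 : Real.sqrt t ≤ 1 := Real.sqrt_le_one.2 ht1'
  have htε : t = Real.sqrt t ^ 2 := (Real.sq_sqrt ht0.le).symm
  have hlog : (Real.log t : ℂ) = 2 * (Real.log (Real.sqrt t) : ℂ) := by
    rw [Real.log_sqrt ht0.le]; push_cast; ring
  have H1 := hE1 t _ hε hε1 htε
  have H2 := hE2 t _ hε hε1 htε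
  have hX := cross_cancel e M _ hε
  rw [← htε] at hX
  rw [split_integral u hu.continuous R hR hx hy t _ hε hε1 htε]
  set ε := Real.sqrt t with hεd
  set I1 := ∫ x in ε..R, u x (t / x) * (1 / (x : ℂ)) with hI1
  set I2 := ∫ y in ε..R, u (t / y) y * (1 / (y : ℂ)) with hI2
  simp only [hg1] at H1
  simp only [hg2] at H2
  have hNM : N ≤ M := by omega
  have hsum : ∑ j ∈ Finset.range N, (t : ℂ) ^ j * (A j + B j - e j j * (Real.log t : ℂ))
      + ∑ j ∈ Finset.Ico N M, (t : ℂ) ^ j * (A j + B j - e j j * (Real.log t : ℂ))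
      = ∑ j ∈ Finset.range M, (t : ℂ) ^ j * (A j + B j - e j j * (Real.log t : ℂ)) :=
    Finset.sum_range_add_sum_Ico _ hNM
  have hcomb : ∑ j ∈ Finset.range M, (t : ℂ) ^ j * (A j + B j - e j j * (Real.log t : ℂ))
      = ∑ j ∈ Finset.range M, (t : ℂ) ^ j * (B j - (∑ k ∈ Finset.range M, e j k * ((ε : ℂ) ^ ((k : ℤ) - j) / (((k : ℤ) - j : ℤ) : ℂ))
        + e j j * (Real.log ε : ℂ)))
      + ∑ j ∈ Finset.range M, (t : ℂ) ^ j * (A j - (∑ k ∈ Finset.range M, e k j * ((ε : ℂ) ^ ((k : ℤ) - j) / (((k : ℤ) - j : ℤ) : ℂ))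
        + e j j * (Real.log ε : ℂ))) := by
    rw [← Finset.sum_add_distrib, ← add_zero (∑ j ∈ Finset.range M, (_ + _)), ← hX, ← Finset.sum_add_distrib]
    refine Finset.sum_congr rfl fun j _ => ?_
    rw [hlog]
    ring
  have htail : ‖∑ j ∈ Finset.Ico N M, (t : ℂ) ^ j * (A j + B j - e j j * (Real.log t : ℂ))‖
      ≤ S * (t ^ N * (1 + |Real.log t|)) := by
    have h1 : ‖∑ j ∈ Finset.Ico N M, (t : ℂ) ^ j * (A j + B j - e j j * (Real.log t : ℂ))‖
        ≤ ∑ j ∈ Finset.Ico N M, (‖A j + B j‖ + ‖e j j‖) * (t ^ N * (1 + |Real.log t|)) := by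
      refine norm_sum_le_of_le _ fun j hj => ?_
      have hj' := (Finset.mem_Ico.1 hj).1
      have hl := abs_nonneg (Real.log t)
      rw [norm_mul, norm_pow, Complex.norm_real, Real.norm_of_nonneg ht0.le]
      have hn : ‖A j + B j - e j j * (Real.log t : ℂ)‖ ≤ (‖A j + B j‖ + ‖e j j‖) * (1 + |Real.log t|) := by
        refine (norm_sub_le _ _).trans ?_
        rw [norm_mul, Complex.norm_real, Real.norm_eq_abs]
        nlinarith [norm_nonneg (A j + B j), norm_nonneg (e j j), mul_nonneg (norm_nonneg (A j + B j)) hl]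
      calc _ ≤ t ^ N * ((‖A j + B j‖ + ‖e j j‖) * (1 + |Real.log t|)) :=
            mul_le_mul (pow_le_pow_of_le_one ht0.le ht1' hj') hn (norm_nonneg _) (by positivity)
        _ = _ := by ring
    refine h1.trans ?_
    rw [← Finset.sum_mul]
    refine mul_le_mul_of_nonneg_right ?_ (by positivity)
    refine Finset.sum_le_sum_of_subset_of_nonneg ?_ fun j _ _ => by positivity
    intro j hj
    exact Finset.mem_range.2 (Finset.mem_Ico.1 hj).2
  have hdec : I1 + I2 - ∑ j ∈ Finset.range N, (t : ℂ) ^ j * (A j + B j - e j j * (Real.log t : ℂ))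
      = (I1 - ∑ j ∈ Finset.range M, (t : ℂ) ^ j * (B j - (∑ k ∈ Finset.range M, e j k * ((ε : ℂ) ^ ((k : ℤ) - j) / (((k : ℤ) - j : ℤ) : ℂ))
        + e j j * (Real.log ε : ℂ))))
      + (I2 - ∑ j ∈ Finset.range M, (t : ℂ) ^ j * (A j - (∑ k ∈ Finset.range M, e k j * ((ε : ℂ) ^ ((k : ℤ) - j) / (((k : ℤ) - j : ℤ) : ℂ))
        + e j j * (Real.log ε : ℂ))))
      + ∑ j ∈ Finset.Ico N M, (t : ℂ) ^ j * (A j + B j - e j j * (Real.log t : ℂ)) := by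
    rw [← eq_sub_iff_add_eq] at hsum
    rw [hsum, hcomb]
    ring
  rw [hdec]
  refine norm_add₃_le.trans ((add_le_add (add_le_add H1 H2) htail).trans ?_)
  have hp : 0 < t ^ N := by positivity
  have hl := abs_nonneg (Real.log t)
  nlinarith [mul_nonneg (mul_nonneg (add_nonneg hC1 hC2) hp.le) hl, mul_nonneg hp.le hl]

end
end

section
/- Let K ⊂ ℂ × ℕ₀ be a finite set of pairs (α,k), all distinct. Let v: (0,1] × [0,1] → ℂ be such that for every p ∈ ℕ₀ the partial derivative ∂_t^p v(ζ,t) (in the second variable) exists and is continuous, and suppose there are δ > 0, constants C_p, and continuous functions w_{α,k,p}: [0,1] → ℂ for (α,k) ∈ K such that | ∂_t^p v(ζ,t) − Σ_{(α,k) ∈ K} ζ^{α} (ln ζ)^k w_{α,k,p}(t) | ≤ C_p ζ^{δ} for all ζ ∈ (0,1], t ∈ [0,1], p ∈ ℕ₀. Then the following are equivalent: (i) for every p ∈ ℕ₀ there is a constant C'_p with ∫_0^1 |∂_t^p v(ζ,t)| (1/ζ) dζ ≤ C'_p for all t ∈ [0,1]; (ii) every (α,k) ∈ K for which w_{α,k,p}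 is not identically zero for some p satisfies Re α > 0. -/
open MeasureTheory Set


def SalP (h : ℝ → ℂ) : Prop :=
  ContinuousOn h (Ici 1) ∧ ∃ M : ℝ, ∀ L : ℝ, 0 < L →
    ∀ᶠ X in Filter.atTop, ‖∫ x in X..(X+L), h x‖ ≤ M

lemma SalP.ii {h : ℝ → ℂ} (hc : ContinuousOn h (Ici 1)) {X L : ℝ} (hX : 1 ≤ X) (hL : 0 < L) :
    IntervalIntegrable h volume X (X+L) := by
  apply ContinuousOn.intervalIntegrable
  rw [uIcc_of_le (by linarith)]
  exact hc.mono (fun x hx => le_trans hX hx.1)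

lemma SalP.add {f g : ℝ → ℂ} (hf : SalP f) (hg : SalP g) : SalP (fun x => f x + g x) := by
  obtain ⟨hf, M, hM⟩ := hf
  obtain ⟨hg, N, hN⟩ := hg
  refine ⟨hf.add hg, M + N, fun L hL => ?_⟩
  filter_upwards [hM L hL, hN L hL, Filter.eventually_ge_atTop 1] with X h1 h2 hX
  rw [intervalIntegral.integral_add (SalP.ii hf hX hL) (SalP.ii hg hX hL)]
  exact (norm_add_le _ _).trans (add_le_add h1 h2)

lemma SalP.neg {f : ℝ → ℂ} (hf : SalP f) : SalP (fun x => - f x) := by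
  obtain ⟨hf, M, hM⟩ := hf
  refine ⟨hf.neg, M, fun L hL => ?_⟩
  filter_upwards [hM L hL] with X h1
  rwa [intervalIntegral.integral_neg, norm_neg]

lemma SalP.sum {ι : Type*} (s : Finset ι) (f : ι → ℝ → ℂ) (hf : ∀ i ∈ s, SalP (f i)) :
    SalP (fun x => ∑ i ∈ s, f i x) := by
  classical
  induction s using Finset.induction_on with
  | empty => exact ⟨by simpa using continuousOn_const, 0, fun L hL => by simp⟩
  | insert a s ha ih =>
    simp only [Finset.sum_insert ha]
    exact (hf a (by simp)).add (ih (fun i hi => hf i (by simp [hi])))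

lemma SalP.decay {h : ℝ → ℂ} (hc : ContinuousOn h (Ici 1)) (g : ℝ → ℝ)
    (hg : Filter.Tendsto g Filter.atTop (nhds 0)) (hb : ∀ x, 1 ≤ x → ‖h x‖ ≤ g x) : SalP h := by
  refine ⟨hc, 1, fun L hL => ?_⟩
  have h1 : ∀ᶠ x in Filter.atTop, g x < 1 / L := hg.eventually_lt_const (by positivity)
  obtain ⟨A, hA⟩ := Filter.eventually_atTop.1 h1
  filter_upwards [Filter.eventually_ge_atTop 1, Filter.eventually_ge_atTop A] with X hX hXA
  have := intervalIntegral.norm_integral_le_of_norm_le_const (f := h) (a := X) (b := X+L)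
    (C := 1 / L) (fun x hx => by
      rw [uIoc_of_le (by linarith)] at hx
      exact (hb x (by linarith [hx.1])).trans (hA x (by linarith [hx.1])).le)
  refine this.trans (le_of_eq ?_)
  rw [add_sub_cancel_left, abs_of_pos hL]
  field_simp

lemma SalP.const {c : ℂ} (h : SalP (fun _ => c)) : c = 0 := by
  obtain ⟨_, M, hM⟩ := h
  by_contra hc
  have hc' : 0 < ‖c‖ := norm_pos_iff.2 hc
  have hL : 0 < (|M| + 1) / ‖c‖ := by positivity
  obtain ⟨X, hX⟩ := (hM _ hL).exists
  rw [intervalIntegral.integral_const, add_sub_cancel_left, norm_smul, Real.norm_of_nonneg hL.le,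
    div_mul_cancel₀ _ hc'.ne'] at hX
  linarith [le_abs_self M]

lemma sal_cpow (x : ℝ) (a : ℂ) : ((Real.exp (-x) : ℝ) : ℂ) ^ a = Complex.exp (-(a * x)) := by
  rw [Complex.cpow_def_of_ne_zero (by exact_mod_cast (Real.exp_pos _).ne'), ← Complex.ofReal_log
    (Real.exp_pos _).le, Real.log_exp]
  congr 1
  push_cast
  ring

lemma sal_term_cont (u b : ℂ) (k m : ℕ) : ContinuousOn
    (fun x : ℝ => u * Complex.exp (b * x) * (-(x:ℂ)) ^ k * ((-(x:ℂ)) ^ m)⁻¹) (Ici 1) := by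
  apply ContinuousOn.mul (by fun_prop)
  apply ContinuousOn.inv₀ (by fun_prop)
  intro x hx
  have : (x:ℂ) ≠ 0 := by
    have : (1:ℝ) ≤ x := hx
    exact_mod_cast (by linarith : (0:ℝ) < x).ne'
  exact pow_ne_zero _ (neg_ne_zero.2 this)

lemma sal_term_norm (u b : ℂ) (k m : ℕ) (x : ℝ) (hx : 1 ≤ x) :
    ‖u * Complex.exp (b * x) * (-(x:ℂ)) ^ k * ((-(x:ℂ)) ^ m)⁻¹‖
      = ‖u‖ * Real.exp (b.re * x) * x ^ k * (x ^ m)⁻¹ := by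
  simp [Complex.norm_exp, abs_of_pos (by linarith : 0 < x)]

lemma sal_term (u b : ℂ) (k m : ℕ) (h : b.re < 0 ∨ (b.re = 0 ∧ k ≤ m)) (hne : ¬ (b = 0 ∧ k = m)) :
    SalP (fun x : ℝ => u * Complex.exp (b * x) * (-(x:ℂ)) ^ k * ((-(x:ℂ)) ^ m)⁻¹) := by
  by_cases hb : b.re < 0
  · refine SalP.decay (sal_term_cont u b k m) (fun x => ‖u‖ * (x ^ (k:ℝ) * Real.exp (-(-b.re) * x))) ?_ ?_
    · simpa using (tendsto_rpow_mul_exp_neg_mul_atTop_nhds_zero (k:ℝ) (-b.re) (by linarith)).const_mul ‖u‖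
    · intro x hx
      rw [sal_term_norm _ _ _ _ _ hx, Real.rpow_natCast, neg_neg]
      have : (x ^ m)⁻¹ ≤ 1 := inv_le_one_of_one_le₀ (one_le_pow₀ hx)
      calc _ ≤ ‖u‖ * Real.exp (b.re * x) * x ^ k * 1 := by gcongr
        _ = _ := by ring
  · obtain ⟨h0, hk⟩ := h.resolve_left hb
    rcases hk.lt_or_eq with hk | hk
    · refine SalP.decay (sal_term_cont u b k m) (fun x => ‖u‖ * x⁻¹) ?_ ?_
      · simpa using tendsto_inv_atTop_zero.const_mul ‖u‖
      · intro x hx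
        have hx0 : 0 < x := by linarith
        rw [sal_term_norm _ _ _ _ _ hx, h0]
        simp only [zero_mul, Real.exp_zero, mul_one, mul_assoc]
        gcongr
        rw [← div_eq_mul_inv, div_le_iff₀ (by positivity), inv_mul_eq_div, le_div_iff₀ hx0,
          ← pow_succ]
        exact pow_le_pow_right₀ hx hk
    · subst hk
      have hb0 : b ≠ 0 := fun h => hne ⟨h, rfl⟩
      refine ⟨sal_term_cont u b k k, ‖u‖ * (2 / ‖b‖), fun L hL => ?_⟩
      filter_upwards [Filter.eventually_ge_atTop 1] with X hX
      have : ∫ x in X..(X+L), u * Complex.exp (b * x) * (-(x:ℂ)) ^ k * ((-(x:ℂ)) ^ k)⁻¹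
          = ∫ x in X..(X+L), u * Complex.exp (b * x) := by
        apply intervalIntegral.integral_congr
        intro x hx
        rw [uIcc_of_le (by linarith)] at hx
        have : (x:ℂ) ≠ 0 := by exact_mod_cast (by linarith [hx.1] : (0:ℝ) < x).ne'
        exact mul_inv_cancel_right₀ (pow_ne_zero _ (neg_ne_zero.2 this)) _
      rw [this, intervalIntegral.integral_const_mul, integral_exp_mul_complex hb0, norm_mul, norm_div]
      gcongr
      refine (norm_sub_le _ _).trans ?_
      simp [Complex.norm_exp, h0]
      norm_num

lemma sal_window (f : ℝ → ℂ) (C' : ℝ) (hC : (∫⁻ ζ in Ioc (0:ℝ) 1, ENNReal.ofReal (‖f ζ‖ / ζ))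
    ≤ ENNReal.ofReal C') (X L : ℝ) (hX : 1 ≤ X) :
    (∫⁻ x in Ioc X (X+L), ENNReal.ofReal ‖f (Real.exp (-x))‖) ≤ ENNReal.ofReal C' := by
  have h := lintegral_image_eq_lintegral_abs_deriv_mul (s := Ioc X (X+L)) measurableSet_Ioc
    (f := fun x => Real.exp (-x)) (f' := fun x => - Real.exp (-x))
    (fun x _ => by simpa using ((hasDerivAt_neg x).exp).hasDerivWithinAt)
    (fun x _ y _ hxy => by simpa using hxy) (fun ζ => ENNReal.ofReal (‖f ζ‖ / ζ))
  refine le_trans ?_ hC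
  refine le_trans (le_of_eq ?_) (lintegral_mono_set (s := (fun x => Real.exp (-x)) '' Ioc X (X+L)) ?_)
  · rw [h]
    apply lintegral_congr
    intro x
    rw [← ENNReal.ofReal_mul (abs_nonneg _), abs_neg, Real.abs_exp,
      mul_div_cancel₀ _ (Real.exp_pos _).ne']
  · rintro _ ⟨x, hx, rfl⟩
    exact ⟨Real.exp_pos _, Real.exp_le_one_iff.2 (by linarith [hx.1])⟩

lemma sal_forward (K : Finset (ℂ × ℕ)) (f : ℝ → ℂ) (hf : ContinuousOn f (Ioc 0 1))
    (δ : ℝ) (hδ : 0 < δ) (C : ℝ) (w : ℂ × ℕ → ℂ)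
    (hbound : ∀ ζ ∈ Ioc (0:ℝ) 1, ‖f ζ -
          ∑ ak ∈ K, (ζ : ℂ) ^ (ak.1) * ((Real.log ζ : ℝ) : ℂ) ^ ak.2 * w ak‖ ≤ C * ζ ^ δ)
    (C' : ℝ) (hC : (∫⁻ ζ in Ioc (0:ℝ) 1, ENNReal.ofReal (‖f ζ‖ / ζ)) ≤ ENNReal.ofReal C')
    (j : ℂ × ℕ) (hj : j ∈ K) (hwj : w j ≠ 0) : 0 < j.1.re := by
  classical
  by_contra hneg
  push Not at hneg
  obtain ⟨l, hl, hmax⟩ := Finset.exists_max_image (K.filter (fun a => w a ≠ 0))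
    (fun a => toLex (-a.1.re, a.2)) ⟨j, by simp [hj, hwj]⟩
  obtain ⟨hlK, hwl⟩ := Finset.mem_filter.1 hl
  have hmax' : ∀ a ∈ K, w a ≠ 0 → l.1.re < a.1.re ∨ (l.1.re = a.1.re ∧ a.2 ≤ l.2) := by
    intro a ha hwa
    have := hmax a (Finset.mem_filter.2 ⟨ha, hwa⟩)
    rw [Prod.Lex.toLex_le_toLex] at this
    simp only [neg_lt_neg_iff, neg_inj] at this
    rcases this with h | h
    · exact Or.inl h
    · exact Or.inr ⟨h.1.symm, h.2⟩
  have hl0 : l.1.re ≤ 0 := by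
    rcases hmax' j hj hwj with h | ⟨h, _⟩ <;> linarith
  let E : ℝ → ℂ := fun x => Complex.exp (l.1 * x) * ((-(x:ℂ)) ^ l.2)⁻¹
  have hE : ContinuousOn E (Ici 1) := by
    have := sal_term_cont 1 l.1 0 l.2
    simpa [E] using this
  have hEn : ∀ x, 1 ≤ x → ‖E x‖ ≤ 1 := by
    intro x hx
    have := sal_term_norm 1 l.1 0 l.2 x hx
    simp only [one_mul, pow_zero, mul_one, norm_one] at this
    simp only [E, this]
    have h1 : (x ^ l.2)⁻¹ ≤ 1 := inv_le_one_of_one_le₀ (one_le_pow₀ hx)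
    have h2 : Real.exp (l.1.re * x) ≤ 1 := Real.exp_le_one_iff.2 (by nlinarith)
    exact mul_le_one₀ h2 (by positivity) h1
  have hmem : ∀ x : ℝ, 1 ≤ x → Real.exp (-x) ∈ Ioc (0:ℝ) 1 := fun x hx =>
    ⟨Real.exp_pos _, Real.exp_le_one_iff.2 (by linarith)⟩
  have hfc : ContinuousOn (fun x : ℝ => f (Real.exp (-x))) (Ici 1) :=
    hf.comp (by fun_prop) (fun x hx => hmem x hx)
  have hG : SalP (fun x => f (Real.exp (-x)) * E x) := by
    refine ⟨hfc.mul hE, max C' 0, fun L hL => ?_⟩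
    filter_upwards [Filter.eventually_ge_atTop 1] with X hX
    rw [intervalIntegral.integral_of_le (by linarith)]
    have h1 : ‖∫ x in Ioc X (X+L), f (Real.exp (-x)) * E x‖ₑ ≤ ENNReal.ofReal C' := by
      refine (enorm_integral_le_lintegral_enorm _).trans (le_trans ?_ (sal_window f C' hC X L hX))
      refine setLIntegral_mono' measurableSet_Ioc (fun x hx => ?_)
      rw [← ofReal_norm]
      apply ENNReal.ofReal_le_ofReal
      rw [norm_mul]
      exact mul_le_of_le_one_right (norm_nonneg _) (hEn x (by linarith [hx.1]))
    rw [← ofReal_norm] at h1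
    have h2 := ENNReal.toReal_mono ENNReal.ofReal_ne_top h1
    rwa [ENNReal.toReal_ofReal (norm_nonneg _), ENNReal.toReal_ofReal'] at h2
  let T : ℂ × ℕ → ℝ → ℂ := fun a x => w a * Complex.exp ((l.1 - a.1) * x) * (-(x:ℂ)) ^ a.2 * ((-(x:ℂ)) ^ l.2)⁻¹
  have hTc : ∀ a, ContinuousOn (T a) (Ici 1) := fun a => sal_term_cont _ _ _ _
  have hT : ∀ a ∈ K.erase l, SalP (T a) := by
    intro a ha
    obtain ⟨hal, haK⟩ := Finset.mem_erase.1 ha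
    by_cases hwa : w a = 0
    · have : T a = fun _ => 0 := by ext x; simp [T, hwa]
      rw [this]
      exact ⟨continuousOn_const, 0, fun L hL => by simp⟩
    · apply sal_term
      · rcases hmax' a haK hwa with h | h
        · left; simp; linarith
        · right; exact ⟨by simp [h.1], h.2⟩
      · rintro ⟨h1, h2⟩
        exact hal (Prod.ext (sub_eq_zero.1 h1).symm h2)
  have hR : SalP (fun x => f (Real.exp (-x)) * E x - ∑ a ∈ K, T a x) := by
    refine SalP.decay ((hfc.mul hE).sub (continuousOn_finsetSum _ (fun a _ => hTc a)))
      (fun x => C * (x ^ (0:ℝ) * Real.exp (-δ * x))) ?_ ?_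
    · simpa only [mul_zero] using (tendsto_rpow_mul_exp_neg_mul_atTop_nhds_zero 0 δ hδ).const_mul C
    · intro x hx
      have hb := hbound _ (hmem x hx)
      have : f (Real.exp (-x)) * E x - ∑ a ∈ K, T a x = (f (Real.exp (-x)) -
          ∑ ak ∈ K, ((Real.exp (-x) : ℝ) : ℂ) ^ (ak.1) * ((Real.log (Real.exp (-x)) : ℝ) : ℂ) ^ ak.2 * w ak) * E x := by
        rw [sub_mul, Finset.sum_mul]
        congr 1
        apply Finset.sum_congr rfl
        intro a _
        rw [sal_cpow, Real.log_exp]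
        simp only [T, E]
        rw [show (l.1 - a.1) * (x:ℂ) = -(a.1 * x) + l.1 * x by ring, Complex.exp_add]
        push_cast
        ring
      rw [this, norm_mul]
      refine (mul_le_of_le_one_right (norm_nonneg _) (hEn x hx)).trans (hb.trans (le_of_eq ?_))
      rw [← Real.exp_mul, Real.rpow_zero, one_mul]
      congr 2; ring
  have hfin := (hG.add hR.neg).add (SalP.sum _ _ hT).neg
  have hconst : SalP (fun _ => w l) := by
    obtain ⟨h1, M, hM⟩ := hfin
    refine ⟨continuousOn_const, M, fun L hL => ?_⟩
    filter_upwards [hM L hL, Filter.eventually_ge_atTop 1] with X h2 hX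
    refine le_trans (le_of_eq ?_) h2
    congr 1
    apply intervalIntegral.integral_congr
    intro x hx
    rw [uIcc_of_le (by linarith)] at hx
    have hx0 : (x:ℂ) ≠ 0 := by exact_mod_cast (by linarith [hx.1] : (0:ℝ) < x).ne'
    have : T l x = w l := by
      simp only [T, sub_self, zero_mul, Complex.exp_zero, mul_one]
      exact mul_inv_cancel_right₀ (pow_ne_zero _ (neg_ne_zero.2 hx0)) _
    simp only
    rw [← Finset.add_sum_erase K (fun a => T a x) hlK, this]
    ring
  exact hwl hconst.const

def SalQ (h : ℝ → ℝ → ℂ) : Prop :=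
  ∃ D η : ℝ, 0 < η ∧ 0 ≤ D ∧ ∀ ζ ∈ Ioc (0:ℝ) 1, ∀ t ∈ Icc (0:ℝ) 1, ‖h ζ t‖ ≤ D * ζ ^ η

lemma SalQ.add {f g : ℝ → ℝ → ℂ} (hf : SalQ f) (hg : SalQ g) :
    SalQ (fun ζ t => f ζ t + g ζ t) := by
  obtain ⟨D, η, h1, h2, h3⟩ := hf
  obtain ⟨D', η', h1', h2', h3'⟩ := hg
  refine ⟨D + D', min η η', lt_min h1 h1', by positivity, fun ζ hζ t ht => ?_⟩
  refine (norm_add_le _ _).trans ?_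
  rw [add_mul]
  refine add_le_add ((h3 ζ hζ t ht).trans ?_) ((h3' ζ hζ t ht).trans ?_)
  · exact mul_le_mul_of_nonneg_left
      (Real.rpow_le_rpow_of_exponent_ge hζ.1 hζ.2 (min_le_left _ _)) h2
  · exact mul_le_mul_of_nonneg_left
      (Real.rpow_le_rpow_of_exponent_ge hζ.1 hζ.2 (min_le_right _ _)) h2'

lemma SalQ.sum {ι : Type*} (s : Finset ι) (f : ι → ℝ → ℝ → ℂ) (hf : ∀ i ∈ s, SalQ (f i)) :
    SalQ (fun ζ t => ∑ i ∈ s, f i ζ t) := by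
  classical
  induction s using Finset.induction_on with
  | empty => exact ⟨0, 1, one_pos, le_rfl, by simp⟩
  | insert a s ha ih =>
    simp only [Finset.sum_insert ha]
    exact (hf a (by simp)).add (ih (fun i hi => hf i (by simp [hi])))

lemma sal_q_term (a : ℂ) (k : ℕ) (ha : 0 < a.re) (w : ℝ → ℂ) (hw : ContinuousOn w (Icc 0 1)) :
    SalQ (fun ζ t => (ζ : ℂ) ^ a * ((Real.log ζ : ℝ) : ℂ) ^ k * w t) := by
  obtain ⟨B, hB⟩ := isCompact_Icc.exists_bound_of_continuousOn hw
  have hB0 : 0 ≤ B := (norm_nonneg _).trans (hB 0 (by simp))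
  set s : ℝ := a.re / (2 * (k + 1)) with hs
  have hs0 : 0 < s := by positivity
  refine ⟨(1 / s) ^ k * B, a.re / 2, by positivity, by positivity, fun ζ hζ t ht => ?_⟩
  have h1 := (Real.abs_log_mul_self_rpow_lt ζ s hζ.1 hζ.2 hs0).le
  have hζs : 0 < ζ ^ s := Real.rpow_pos_of_pos hζ.1 _
  rw [abs_mul, abs_of_pos hζs] at h1
  have h2 : (|Real.log ζ| * ζ ^ s) ^ k ≤ (1 / s) ^ k := by gcongr
  rw [norm_mul, norm_mul, norm_pow, Complex.norm_cpow_eq_rpow_re_of_pos hζ.1, Complex.norm_real,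
    Real.norm_eq_abs]
  have h3 : ζ ^ a.re ≤ (ζ ^ s) ^ k * ζ ^ (a.re / 2) := by
    rw [← Real.rpow_mul_natCast hζ.1.le, ← Real.rpow_add hζ.1]
    apply Real.rpow_le_rpow_of_exponent_ge hζ.1 hζ.2
    have : s * k ≤ a.re / 2 := by
      rw [hs, div_mul_eq_mul_div, div_le_div_iff₀ (by positivity) (by positivity)]
      nlinarith
    linarith
  have hp : 0 ≤ ζ ^ (a.re / 2) := Real.rpow_nonneg hζ.1.le _
  calc ζ ^ a.re * |Real.log ζ| ^ k * ‖w t‖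
      ≤ ((ζ ^ s) ^ k * ζ ^ (a.re / 2)) * |Real.log ζ| ^ k * B := by
        gcongr
        exact hB t ht
    _ = (|Real.log ζ| * ζ ^ s) ^ k * B * ζ ^ (a.re / 2) := by rw [mul_pow]; ring
    _ ≤ _ := by gcongr

lemma SalQ.bound {h : ℝ → ℝ → ℂ} (hh : SalQ h) : ∃ C' : ℝ, ∀ t ∈ Icc (0:ℝ) 1,
      (∫⁻ ζ in Ioc (0:ℝ) 1, ENNReal.ofReal (‖h ζ t‖ / ζ)) ≤ ENNReal.ofReal C' := by
  obtain ⟨D, η, h1, h2, h3⟩ := hh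
  have hi : IntegrableOn (fun ζ : ℝ => D * ζ ^ (η - 1)) (Ioc 0 1) := by
    have := (intervalIntegral.intervalIntegrable_rpow' (a := 0) (b := 1) (r := η - 1)
      (by linarith)).const_mul D
    rwa [intervalIntegrable_iff_integrableOn_Ioc_of_le zero_le_one] at this
  refine ⟨∫ ζ in Ioc (0:ℝ) 1, D * ζ ^ (η - 1), fun t ht => ?_⟩
  rw [ofReal_integral_eq_lintegral_ofReal hi]
  · refine setLIntegral_mono' measurableSet_Ioc (fun ζ hζ => ENNReal.ofReal_le_ofReal ?_)
    rw [Real.rpow_sub_one hζ.1.ne', ← mul_div_assoc]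
    exact div_le_div_of_nonneg_right (h3 ζ hζ t ht) hζ.1.le
  · filter_upwards [ae_restrict_mem measurableSet_Ioc] with ζ hζ
    exact mul_nonneg h2 (Real.rpow_nonneg hζ.1.le _)

/-- **Equivalence (C): the integrability conditions of the Singular Asymptotics Lemma
correspond to the condition `Re K₂ > 0` of the Push-Forward Theorem.**
`v(ζ,t)` has continuous `t`-derivatives of all orders and a polyhomogeneous bound at
`ζ = 0` with finite index set `K` and continuous coefficients `w_{α,k,p}`.  Then the
uniform bounds `∫_0^1 |∂_t^p v(ζ,t)| dζ/ζ ≤ C'_p` hold if and only if every index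
`(α,k) ∈ K` whose coefficient `w_{α,k,p}` is not identically zero for some `p`
satisfies `Re α > 0`. -/
theorem sal_integrability_iff_positive_index
    (K : Finset (ℂ × ℕ)) (v : ℝ → ℝ → ℂ)
    (hsmooth : ∀ ζ ∈ Ioc (0:ℝ) 1, ContDiffOn ℝ (⊤ : ℕ∞) (v ζ) (Icc 0 1))
    (hcont : ∀ p : ℕ, ContinuousOn
      (fun z : ℝ × ℝ => iteratedDerivWithin p (v z.1) (Icc 0 1) z.2)
      (Ioc (0:ℝ) 1 ×ˢ Icc (0:ℝ) 1))
    (δ : ℝ) (hδ : 0 < δ) (C : ℕ → ℝ) (w : ℂ × ℕ → ℕ → ℝ → ℂ)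
    (hw : ∀ ak ∈ K, ∀ p : ℕ, ContinuousOn (w ak p) (Icc 0 1))
    (hbound : ∀ p : ℕ, ∀ ζ ∈ Ioc (0:ℝ) 1, ∀ t ∈ Icc (0:ℝ) 1,
      ‖iteratedDerivWithin p (v ζ) (Icc 0 1) t -
          ∑ ak ∈ K, (ζ : ℂ) ^ (ak.1) * ((Real.log ζ : ℝ) : ℂ) ^ ak.2 * w ak p t‖
        ≤ C p * ζ ^ δ) :
    (∀ p : ℕ, ∃ C' : ℝ, ∀ t ∈ Icc (0:ℝ) 1,
      (∫⁻ ζ in Ioc (0:ℝ) 1,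
        ENNReal.ofReal (‖iteratedDerivWithin p (v ζ) (Icc 0 1) t‖ / ζ))
        ≤ ENNReal.ofReal C')
    ↔
    (∀ ak ∈ K, (∃ p : ℕ, ∃ t ∈ Icc (0:ℝ) 1, w ak p t ≠ 0) → 0 < ak.1.re) := by
  constructor
  · rintro h ak hak ⟨p, t, ht, hwt⟩
    obtain ⟨C', hC'⟩ := h p
    refine sal_forward K (fun ζ => iteratedDerivWithin p (v ζ) (Icc 0 1) t) ?_ δ hδ (C p)
      (fun a => w a p t) (fun ζ hζ => hbound p ζ hζ t ht) C' (hC' t ht) ak hak hwt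
    exact (hcont p).comp (f := fun ζ : ℝ => (ζ, t)) (by fun_prop) (fun ζ hζ => ⟨hζ, ht⟩)
  · intro h p
    have hS : SalQ (fun ζ t => ∑ ak ∈ K,
        (ζ : ℂ) ^ (ak.1) * ((Real.log ζ : ℝ) : ℂ) ^ ak.2 * w ak p t) := by
      apply SalQ.sum K (fun ak ζ t => (ζ : ℂ) ^ (ak.1) * ((Real.log ζ : ℝ) : ℂ) ^ ak.2 * w ak p t)
      intro ak hak
      by_cases h0 : ∃ t ∈ Icc (0:ℝ) 1, w ak p t ≠ 0
      · exact sal_q_term _ _ (h ak hak ⟨p, h0⟩) _ (hw ak hak p)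
      · push Not at h0
        refine ⟨0, 1, one_pos, le_rfl, fun ζ hζ t ht => ?_⟩
        simp [h0 t ht]
    have hR : SalQ (fun ζ t => iteratedDerivWithin p (v ζ) (Icc 0 1) t -
        ∑ ak ∈ K, (ζ : ℂ) ^ (ak.1) * ((Real.log ζ : ℝ) : ℂ) ^ ak.2 * w ak p t) := by
      refine ⟨|C p|, δ, hδ, abs_nonneg _, fun ζ hζ t ht => (hbound p ζ hζ t ht).trans ?_⟩
      exact mul_le_mul_of_nonneg_right (le_abs_self _) (Real.rpow_nonneg hζ.1.le _)
    have := (hR.add hS).bound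
    simpa only [sub_add_cancel] using this
end
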